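/- arXiv:2405.07493 — 8 statements merged into one kernel-verified Lean document; each statement's English description precedes it below -/
import Mathlib

section
/- If J and K are two independent randomly-stopped bit sequences, then the concatenation J‖K is a randomly-stopped bit sequence. -/
open MeasureTheory ProbabilityTheory
open scoped ENNReal

/-- `K` is a randomly-stopped bit sequence under the probability measure `μ`. -/
def IsRSBS {Ω : Type*} [MeasurableSpace Ω] (μ : Measure Ω) (K : Ω → List Bool) : Prop :=
  ∀ (pre : List Bool) (b : Bool),
    0 < μ {ω | pre.length < (K ω).length ∧ (K ω).take pre.length = pre} →
    μ {ω | pre.length < (K ω).length ∧ (K ω).take (pre.length + 1) = pre ++ [b]} =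
      2⁻¹ * μ {ω | pre.length < (K ω).length ∧ (K ω).take pre.length = pre}

/-!
A random word is a randomly-stopped bit sequence if and only if, for every word `s`, it is as likely
to start with `s ++ [false]` as with `s ++ [true]`. The letter following a prefix `s` of `J ++ K`
comes from `J` if `J` is not a prefix of `s`; these outcomes are balanced by the property of `J`.
Otherwise `s = J ++ t` for a word `t`, and that letter is the one following the prefix `t` of `K`;
given `J`, these outcomes are balanced by the property of `K`.
-/

section Prefix

variable {α : Type*} {s l j k : List α} {a b : α}

lemma append_singleton_prefix_iff_take_eq :
    s ++ [a] <+: l ↔ s.length < l.length ∧ l.take (s.length + 1) = s ++ [a] := by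
  constructor
  · intro h
    exact ⟨by simpa using h.length_le, by simpa using (List.prefix_iff_eq_take.1 h).symm⟩
  · rintro ⟨-, htake⟩
    exact htake ▸ l.take_prefix _

lemma exists_append_singleton_prefix_iff_take_eq :
    (∃ a, s ++ [a] <+: l) ↔ s.length < l.length ∧ l.take s.length = s := by
  constructor
  · rintro ⟨a, t, rfl⟩
    simp
  · rintro ⟨hlt, htake⟩
    refine ⟨l[s.length], append_singleton_prefix_iff_take_eq.2 ⟨hlt, ?_⟩⟩
    rw [List.take_succ_eq_append_getElem hlt, htake]

lemma eq_of_append_singleton_prefix (ha : s ++ [a] <+: l) (hb : s ++ [b] <+: l) : a = b := by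
  have h : s ++ [a] = s ++ [b] :=
    (List.prefix_of_prefix_length_le ha hb (by simp)).eq_of_length (by simp)
  simpa using h

lemma not_prefix_of_append_singleton_prefix (h : s ++ [a] <+: j) : ¬ j <+: s := fun hjs ↦ by
  simpa using (h.trans hjs).length_le

lemma append_singleton_prefix_append_iff_of_not_prefix (hjs : ¬ j <+: s) :
    s ++ [a] <+: j ++ k ↔ s ++ [a] <+: j := by
  refine ⟨fun h ↦ ?_, fun h ↦ h.trans (List.prefix_append j k)⟩
  rcases List.prefix_or_prefix_of_prefix h (List.prefix_append j k) with hsj | hj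
  · exact hsj
  · rcases List.prefix_concat_iff.1 hj with rfl | hj
    · exact List.prefix_rfl
    · exact absurd hj hjs

end Prefix

section Countable

variable {Ω β : Type*} [MeasurableSpace Ω] {μ : Measure Ω}
  [Countable β] [MeasurableSpace β] [MeasurableSingletonClass β] {f : Ω → β}

lemma measure_inter_preimage_eq_tsum (hf : Measurable f) (A : Set Ω) (t : Set β) :
    μ (A ∩ f ⁻¹' t) = ∑' y : t, μ (A ∩ f ⁻¹' {y.1}) := by
  have hfiber (y : β) : MeasurableSet (f ⁻¹' {y}) := hf (measurableSet_singleton y)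
  rw [Set.inter_comm, ← Measure.restrict_apply (hf t.to_countable.measurableSet),
    ← tsum_measure_preimage_singleton t.to_countable fun y _ ↦ hfiber y]
  simp only [Measure.restrict_apply (hfiber _), Set.inter_comm A]

lemma measure_inter_preimage_congr (hf : Measurable f) {A B : Set Ω} {t : Set β}
    (h : ∀ y ∈ t, μ (A ∩ f ⁻¹' {y}) = μ (B ∩ f ⁻¹' {y})) :
    μ (A ∩ f ⁻¹' t) = μ (B ∩ f ⁻¹' t) := by
  rw [measure_inter_preimage_eq_tsum hf, measure_inter_preimage_eq_tsum hf]
  exact tsum_congr fun y ↦ h y y.2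

lemma map_restrict_eq_smul_map (hf : Measurable f) {A : Set Ω}
    (h : ∀ y, μ (A ∩ f ⁻¹' {y}) = μ A * μ (f ⁻¹' {y})) :
    (μ.restrict A).map f = μ A • μ.map f := by
  refine Measure.ext_of_singleton fun y ↦ ?_
  have hy := measurableSet_singleton y
  rw [Measure.smul_apply, smul_eq_mul, Measure.map_apply hf hy, Measure.map_apply hf hy,
    Measure.restrict_apply (hf hy), Set.inter_comm, h y]

end Countable

section UniformExtensions

variable {α : Type*} [MeasurableSpace (List α)]

/-- `ν`, the law of a random word, extends uniformly if all one-letter extensions `s ++ [a]` of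
a word `s` are equally likely to be prefixes of the random word. For bits this is the notion of a
randomly-stopped bit sequence, stated without conditioning on events of positive probability. -/
def ExtendsUniformly (ν : Measure (List α)) : Prop :=
  ∀ (s : List α) (a b : α), ν {l | s ++ [a] <+: l} = ν {l | s ++ [b] <+: l}

lemma ExtendsUniformly.smul {ν : Measure (List α)} (hν : ExtendsUniformly ν) (c : ℝ≥0∞) :
    ExtendsUniformly (c • ν) := fun s a b ↦ by
  simp only [Measure.smul_apply, hν s a b]

variable [DiscreteMeasurableSpace (List α)]

lemma measure_exists_append_singleton_prefix [Countable α] (ν : Measure (List α)) (s : List α) :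
    ν {l | ∃ a, s ++ [a] <+: l} = ∑' a, ν {l | s ++ [a] <+: l} := by
  rw [Set.ofPred_exists]
  refine measure_iUnion (fun a b hab ↦ ?_) fun _ ↦ .of_discrete
  exact Set.disjoint_left.2 fun l ha hb ↦ hab (eq_of_append_singleton_prefix ha hb)

variable {Ω : Type*} [MeasurableSpace Ω] {μ : Measure Ω} {J K : Ω → List α}

lemma extendsUniformly_map_iff (hK : Measurable K) :
    ExtendsUniformly (μ.map K) ↔
      ∀ (s : List α) (a b : α), μ {ω | s ++ [a] <+: K ω} = μ {ω | s ++ [b] <+: K ω} := by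
  simp only [ExtendsUniformly, Measure.map_apply hK .of_discrete, Set.preimage_ofPred_eq]

variable [Countable α]

lemma measurable_append (hJ : Measurable J) (hK : Measurable K) :
    Measurable fun ω ↦ J ω ++ K ω :=
  (Measurable.of_discrete (f := fun p : List α × List α ↦ p.1 ++ p.2)).comp (hJ.prodMk hK)

theorem ExtendsUniformly.map_append (hJ : Measurable J) (hK : Measurable K)
    (hJunif : ExtendsUniformly (μ.map J))
    (hKunif : ∀ j, ExtendsUniformly ((μ.restrict (J ⁻¹' {j})).map K)) :
    ExtendsUniformly (μ.map fun ω ↦ J ω ++ K ω) := by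
  rw [extendsUniformly_map_iff hJ] at hJunif
  rw [extendsUniformly_map_iff (measurable_append hJ hK)]
  intro s a b
  let E (c : α) : Set Ω := {ω | s ++ [c] <+: J ω ++ K ω}
  let P : Set Ω := J ⁻¹' {j | j <+: s}
  have hP : MeasurableSet P := hJ .of_discrete
  have hdiff (c : α) : E c \ P = {ω | s ++ [c] <+: J ω} := by
    ext ω
    constructor
    · rintro ⟨hE, hJs⟩
      exact (append_singleton_prefix_append_iff_of_not_prefix hJs).1 hE
    · intro h
      exact ⟨h.trans (List.prefix_append _ _), not_prefix_of_append_singleton_prefix h⟩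
  have hinter : μ (E a ∩ P) = μ (E b ∩ P) := by
    refine measure_inter_preimage_congr hJ ?_
    rintro j ⟨t, rfl⟩
    have hfiber (c : α) : E c ∩ J ⁻¹' {j} = {ω | t ++ [c] <+: K ω} ∩ J ⁻¹' {j} := by
      ext ω
      refine and_congr_left fun hω : J ω = j ↦ ?_
      simp only [E, Set.mem_ofPred_eq, hω, List.append_assoc, List.prefix_append_right_inj]
    have hKt := (extendsUniformly_map_iff hK).1 (hKunif j) t a b
    simpa only [hfiber, Measure.restrict_apply' (hJ (measurableSet_singleton j))] using hKt
  calc μ (E a) = μ (E a ∩ P) + μ (E a \ P) := (measure_inter_add_sdiff _ hP).symm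
    _ = μ (E b ∩ P) + μ (E b \ P) := by rw [hinter, hdiff, hdiff, hJunif s a b]
    _ = μ (E b) := measure_inter_add_sdiff _ hP

end UniformExtensions

section RandomlyStopped

variable {Ω : Type*} [MeasurableSpace Ω] {μ : Measure Ω} {K : Ω → List Bool}

lemma isRSBS_iff_forall_pos :
    IsRSBS μ K ↔ ∀ s b, 0 < μ {ω | ∃ a, s ++ [a] <+: K ω} →
      μ {ω | s ++ [b] <+: K ω} = 2⁻¹ * μ {ω | ∃ a, s ++ [a] <+: K ω} := by
  simp only [IsRSBS, ← append_singleton_prefix_iff_take_eq,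
    ← exists_append_singleton_prefix_iff_take_eq]

variable [MeasurableSpace (List Bool)] [DiscreteMeasurableSpace (List Bool)]

theorem isRSBS_iff_extendsUniformly_map (hK : Measurable K) :
    IsRSBS μ K ↔ ExtendsUniformly (μ.map K) := by
  have hsum (s : List Bool) : μ {ω | ∃ a, s ++ [a] <+: K ω} =
      μ {ω | s ++ [true] <+: K ω} + μ {ω | s ++ [false] <+: K ω} := by
    have h := measure_exists_append_singleton_prefix (μ.map K) s
    simpa only [Measure.map_apply hK .of_discrete, Set.preimage_ofPred_eq, tsum_fintype,
      Fintype.sum_bool] using h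
  rw [isRSBS_iff_forall_pos, extendsUniformly_map_iff hK]
  constructor
  · intro h s a b
    rcases eq_zero_or_pos (μ {ω | ∃ a, s ++ [a] <+: K ω}) with hzero | hpos
    · have hnull (c : Bool) : μ {ω | s ++ [c] <+: K ω} = 0 :=
        measure_mono_null (Set.ofPred_subset_ofPred.2 fun ω hω ↦ ⟨c, hω⟩) hzero
      rw [hnull a, hnull b]
    · rw [h s a hpos, h s b hpos]
  · intro h s b _
    rw [hsum, h s true b, h s false b, ← two_mul,
      ENNReal.inv_mul_cancel_left two_ne_zero ENNReal.ofNat_ne_top]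

end RandomlyStopped

theorem stmt2_general {Ω : Type*} [MeasurableSpace Ω] (μ : Measure Ω)
    (J K : Ω → List Bool)
    (hJmeas : ∀ j : List Bool, MeasurableSet {ω | J ω = j})
    (hKmeas : ∀ k : List Bool, MeasurableSet {ω | K ω = k})
    (hindep : ∀ j k : List Bool,
      μ {ω | J ω = j ∧ K ω = k} = μ {ω | J ω = j} * μ {ω | K ω = k})
    (hJ : IsRSBS μ J) (hK : IsRSBS μ K) :
    IsRSBS μ (fun ω => J ω ++ K ω) := by
  let _ : MeasurableSpace (List Bool) := ⊤
  have _ : DiscreteMeasurableSpace (List Bool) := ⟨fun _ ↦ trivial⟩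
  have hJm : Measurable J := measurable_to_countable' hJmeas
  have hKm : Measurable K := measurable_to_countable' hKmeas
  rw [isRSBS_iff_extendsUniformly_map hJm] at hJ
  rw [isRSBS_iff_extendsUniformly_map hKm] at hK
  rw [isRSBS_iff_extendsUniformly_map (measurable_append hJm hKm)]
  refine hJ.map_append hJm hKm fun j ↦ ?_
  have hlaw : (μ.restrict (J ⁻¹' {j})).map K = μ (J ⁻¹' {j}) • μ.map K :=
    map_restrict_eq_smul_map hKm (hindep j)
  exact hlaw ▸ hK.smul _

/-- If `J` and `K` are two independent randomly-stopped bit sequences, then the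
concatenation `J ‖ K` is a randomly-stopped bit sequence. -/
theorem stmt2 {Ω : Type*} [MeasurableSpace Ω] (μ : Measure Ω) [IsProbabilityMeasure μ]
    (J K : Ω → List Bool)
    (hJmeas : ∀ j : List Bool, MeasurableSet {ω | J ω = j})
    (hKmeas : ∀ k : List Bool, MeasurableSet {ω | K ω = k})
    (hindep : ∀ j k : List Bool,
      μ {ω | J ω = j ∧ K ω = k} = μ {ω | J ω = j} * μ {ω | K ω = k})
    (hJ : IsRSBS μ J) (hK : IsRSBS μ K) :
    IsRSBS μ (fun ω => J ω ++ K ω) :=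
  stmt2_general μ J K hJmeas hKmeas hindep hJ hK
end

section
/- Let K be a random variable taking values in {0,1}* such that P(K = k) ≤ 2^{-|k|} for every k ∈ {0,1}*, and let E be an event on the same probability space. Define the random variable K·1_E taking values in {0,1}* ∪ {⊥}, where ⊥ ∉ {0,1}* is a distinct symbol, by K·1_E = K if E occurs and K·1_E = ⊥ otherwise. Then H(K·1_E) ≥ E[|K|·1_E], i.e., the Shannon entropy of K·1_E is at least the expectation of |K| restricted to the event E. -/
open MeasureTheory ProbabilityTheory
open scoped ENNReal

/-- The Shannon entropy (in bits) of the discrete random variable `X` under `μ`,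
expressed as a value in `ℝ≥0∞` (each term `-p log₂ p` is nonnegative since `p ≤ 1`). -/
noncomputable def entBits {Ω α : Type*} [MeasurableSpace Ω] (μ : Measure Ω)
    (X : Ω → α) : ℝ≥0∞ :=
  ∑' x : α, ENNReal.ofReal
    (-((μ {ω | X ω = x}).toReal * Real.logb 2 (μ {ω | X ω = x}).toReal))

/-!
A value `k` of probability `p ≤ 2 ^ (-ℓ k)` has surprisal `-log₂ p ≥ ℓ k`, so a random variable all
of whose values obey this bound has entropy at least the mean of `ℓ`. Restricting `K` to `E` only
lowers the probability of each `k`, and `⊥` obeys the bound with `ℓ ⊥ = 0`.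
-/

open scoped NNReal

lemma mul_le_neg_mul_logb_of_le_rpow_neg {b p l : ℝ} (hb : 1 < b) (hp : 0 ≤ p)
    (hpl : p ≤ b ^ (-l)) : l * p ≤ -(p * Real.logb b p) := by
  rcases hp.eq_or_lt with rfl | hp_pos
  · simp
  have hlog : Real.logb b p ≤ -l := (Real.logb_le_iff_le_rpow hb hp_pos).2 hpl
  calc l * p = p * l := mul_comm l p
    _ ≤ p * -Real.logb b p := mul_le_mul_of_nonneg_left (le_neg_of_le_neg hlog) hp
    _ = -(p * Real.logb b p) := mul_neg p _

lemma coe_mul_le_ofReal_neg_mul_logb {b l : ℝ≥0} {p : ℝ≥0∞} (hb : 1 < b)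
    (hpl : p ≤ (b : ℝ≥0∞) ^ (-(l : ℝ))) :
    l * p ≤ ENNReal.ofReal (-(p.toReal * Real.logb b p.toReal)) := by
  have hb_ne : b ≠ 0 := (zero_lt_one.trans hb).ne'
  rw [← ENNReal.coe_rpow_of_ne_zero hb_ne] at hpl
  lift p to ℝ≥0 using ne_top_of_le_ne_top ENNReal.coe_ne_top hpl
  have hpl_real : (p : ℝ) ≤ (b : ℝ) ^ (-(l : ℝ)) := mod_cast hpl
  rw [← ENNReal.coe_mul, ← ENNReal.ofReal_coe_nnreal, NNReal.coe_mul, ENNReal.coe_toReal]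
  exact ENNReal.ofReal_le_ofReal
    (mul_le_neg_mul_logb_of_le_rpow_neg (mod_cast hb) p.coe_nonneg hpl_real)

lemma tsum_mul_measure_le_entBits {Ω α : Type*} [MeasurableSpace Ω] {μ : Measure Ω} {X : Ω → α}
    {ℓ : α → ℝ≥0} (hX : ∀ x, μ {ω | X ω = x} ≤ (2 : ℝ≥0∞) ^ (-(ℓ x : ℝ))) :
    ∑' x, (ℓ x : ℝ≥0∞) * μ {ω | X ω = x} ≤ entBits μ X :=
  ENNReal.tsum_le_tsum fun x => coe_mul_le_ofReal_neg_mul_logb one_lt_two (hX x)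

lemma setOf_ite_some_none_eq_some {Ω α : Type*} (K : Ω → α) (E : Set Ω)
    [∀ ω, Decidable (ω ∈ E)] (k : α) :
    {ω | (if ω ∈ E then some (K ω) else none) = some k} = {ω | K ω = k} ∩ E := by
  ext ω
  by_cases hω : ω ∈ E <;> simp [hω]

theorem stmt5_general {Ω α : Type*} [MeasurableSpace Ω] (μ : Measure Ω) [IsProbabilityMeasure μ]
    (K : Ω → α) (ℓ : α → ℝ≥0) (E : Set Ω) [∀ ω, Decidable (ω ∈ E)]
    (hbound : ∀ k, μ {ω | K ω = k} ≤ (2 : ℝ≥0∞) ^ (-(ℓ k : ℝ))) :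
    ∑' k, (ℓ k : ℝ≥0∞) * μ ({ω | K ω = k} ∩ E) ≤
      entBits μ (fun ω => if ω ∈ E then some (K ω) else none) := by
  set X : Ω → Option α := fun ω => if ω ∈ E then some (K ω) else none
  let ℓ' : Option α → ℝ≥0 := fun x => x.elim 0 ℓ
  have hfiber (k : α) : {ω | X ω = some k} = {ω | K ω = k} ∩ E :=
    setOf_ite_some_none_eq_some K E k
  have hX : ∀ x, μ {ω | X ω = x} ≤ (2 : ℝ≥0∞) ^ (-(ℓ' x : ℝ))
    | none => by simpa [ℓ'] using prob_le_one
    | some k => by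
      rw [hfiber]
      exact (measure_mono Set.inter_subset_left).trans (hbound k)
  calc ∑' k, (ℓ k : ℝ≥0∞) * μ ({ω | K ω = k} ∩ E)
      = ∑' k, (ℓ' (some k) : ℝ≥0∞) * μ {ω | X ω = some k} := by simp only [hfiber, ℓ', Option.elim]
    _ ≤ ∑' x, (ℓ' x : ℝ≥0∞) * μ {ω | X ω = x} :=
      ENNReal.tsum_comp_le_tsum_of_injective (Option.some_injective α) _
    _ ≤ entBits μ X := tsum_mul_measure_le_entBits hX

/-- If `K` takes values in `{0,1}*` with `P(K = k) ≤ 2^{-|k|}` for every `k`, and `E` is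
an event, then the Shannon entropy of `K·1_E` (which equals `K` on `E` and a distinct
symbol `⊥ = none` off `E`) is at least `E[|K|·1_E]`. -/
theorem stmt5 {Ω : Type*} [MeasurableSpace Ω] (μ : Measure Ω) [IsProbabilityMeasure μ]
    (K : Ω → List Bool)
    (hKmeas : ∀ k : List Bool, MeasurableSet {ω | K ω = k})
    (E : Set Ω) (hE : MeasurableSet E) [∀ ω, Decidable (ω ∈ E)]
    (hbound : ∀ k : List Bool, μ {ω | K ω = k} ≤ ((2 : ℝ≥0∞)⁻¹) ^ k.length) :
    ∑' k : List Bool, (k.length : ℝ≥0∞) * μ ({ω | K ω = k} ∩ E) ≤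
      entBits μ (fun ω => if ω ∈ E then some (K ω) else (none : Option (List Bool))) := by
  simpa using stmt5_general μ K (fun k => k.length) E fun k => by
    simpa [ENNReal.rpow_neg, ENNReal.inv_pow] using hbound k
end

section
/- Let K, K_A, K_B be random variables taking values in {0,1}* and W a jointly distributed random variable, all on the same probability space, such that K is a conditionally randomly-stopped bit sequence given W. Then E[|K|·1{K = K_A = K_B}] ≤ H(K_A·1{K_A = K_B} | W, 1{K_A = K_B}) + log₂ 3, where K_A·1{K_A = K_B} equals K_A if K_A = K_B and equals a distinct symbol ⊥ ∉ {0,1}* otherwise. Equivalently, E[|K|·1{K = K_A = K_B}] ≤ P(K_A = K_B)·H(K_A | W, K_A = K_B) + log₂ 3, where H(K_A | W, K_A = K_B) is the conditional entropy of K_A given W computed under the conditional probability measure given the event {K_A = K_B}. -/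
open MeasureTheory ProbabilityTheory
open scoped ENNReal

/-- `K` is a conditionally randomly-stopped bit sequence given `W`: for every `w` in the
support of `W`, the conditional distribution of `K` given `W = w` is a randomly-stopped
bit sequence distribution. -/
def IsCondRSBS {Ω β : Type*} [MeasurableSpace Ω] (μ : Measure Ω) (K : Ω → List Bool)
    (W : Ω → β) : Prop :=
  ∀ w : β, 0 < μ {ω | W ω = w} → IsRSBS (μ[|{ω | W ω = w}]) K

/-- The conditional Shannon entropy (in bits) `H(X | W)` of `X` given the discrete
random variable `W`, under `μ`: `∑_w P(W = w) H(X | W = w)`. -/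
noncomputable def condEntBits {Ω α β : Type*} [MeasurableSpace Ω] (μ : Measure Ω)
    (X : Ω → α) (W : Ω → β) : ℝ≥0∞ :=
  ∑' w : β, μ {ω | W ω = w} * entBits (μ[|{ω | W ω = w}]) X

/-!
Write `p x = P(K = X = x, s)` for the pieces of the event `K = X` inside an event `s`, `q` for
their total mass, `a x = P(X = x, s)` and `c = P(s)`. Since `p x ≤ 2 ^ (-ℓ x)`,
`∑ ℓ x * p x ≤ ∑ p x * log (1 / p x) = ∑ p x * log (q / p x) + q * log (1 / q)`.
The last term is at most `(log e) / e`. The entropy term is monotone in the event, because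
`p * log ((p + r) / p)` increases in both `p` and `r` by Bernoulli's inequality; hence it is at
most `∑ a x * log (c / a x) = P(s) * H(X | s)`. Averaging over the values of `W` gives the
conditional inequality. A randomly-stopped bit sequence satisfies the hypothesis with `ℓ` the
length, since each further bit of a prefix halves the probability.
-/

lemma mul_logb_div_le_mul_logb_div {b p q a c : ℝ} (hb : 1 < b) (hp : 0 ≤ p) (hpq : p ≤ q)
    (hpa : p ≤ a) (h : q - p ≤ c - a) : p * Real.logb b (q / p) ≤ a * Real.logb b (c / a) := by
  have hac : a ≤ c := by linarith
  obtain rfl | hp := hp.eq_or_lt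
  · obtain rfl | ha := hpa.eq_or_lt
    · simp
    · simpa using mul_nonneg ha.le (Real.logb_nonneg hb ((one_le_div ha).2 hac))
  have ha : 0 < a := hp.trans_le hpa
  have hq : 0 < q := hp.trans_le hpq
  have bernoulli : (1 + (c - a) / p) ^ (p / a) ≤ c / a := by
    calc (1 + (c - a) / p) ^ (p / a) ≤ 1 + p / a * ((c - a) / p) :=
          rpow_one_add_le_one_add_mul_self
            (by linarith [div_nonneg (sub_nonneg.2 hac) hp.le]) (by positivity)
            (div_le_one_of_le₀ hpa ha.le)
      _ = c / a := by field_simp; ring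
  have hqp : q / p ≤ 1 + (c - a) / p := by
    rw [div_le_iff₀ hp, add_mul, div_mul_cancel₀ _ hp.ne']
    linarith
  have hpow : (q / p) ^ (p / a) ≤ c / a :=
    (Real.rpow_le_rpow (by positivity) hqp (by positivity)).trans bernoulli
  calc p * Real.logb b (q / p) = a * Real.logb b ((q / p) ^ (p / a)) := by
        rw [Real.logb_rpow_eq_mul_logb_of_pos (by positivity)]
        field_simp
    _ ≤ a * Real.logb b (c / a) := by gcongr

lemma negMulLog_le_inv_exp_one {x : ℝ} (hx : 0 ≤ x) : Real.negMulLog x ≤ (Real.exp 1)⁻¹ := by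
  obtain rfl | hx := hx.eq_or_lt
  · simpa using (Real.exp_pos 1).le
  have hlog : Real.log (x⁻¹ / Real.exp 1) ≤ x⁻¹ / Real.exp 1 - 1 :=
    Real.log_le_sub_one_of_pos (by positivity)
  rw [Real.log_div (by positivity) (by positivity), Real.log_exp, Real.log_inv] at hlog
  calc Real.negMulLog x = x * -Real.log x := by rw [Real.negMulLog]; ring
    _ ≤ x * (x⁻¹ / Real.exp 1) := by gcongr; linarith
    _ = (Real.exp 1)⁻¹ := by field_simp

lemma mul_logb_inv_le {b x : ℝ} (hb : 1 < b) (hx : 0 ≤ x) :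
    x * Real.logb b x⁻¹ ≤ Real.logb b (Real.exp 1) / Real.exp 1 := by
  have hlog : 0 < Real.log b := Real.log_pos hb
  calc x * Real.logb b x⁻¹ = Real.negMulLog x / Real.log b := by
        rw [Real.logb, Real.log_inv, Real.negMulLog]; ring
    _ ≤ (Real.exp 1)⁻¹ / Real.log b := by gcongr; exact negMulLog_le_inv_exp_one hx
    _ = Real.logb b (Real.exp 1) / Real.exp 1 := by
        rw [Real.logb, Real.log_exp]; ring

lemma nat_mul_le_mul_logb_div_add {b p q : ℝ} {n : ℕ} (hb : 1 < b) (hp : 0 ≤ p) (hpq : p ≤ q)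
    (hpn : p ≤ b⁻¹ ^ n) : n * p ≤ p * Real.logb b (q / p) + p * Real.logb b q⁻¹ := by
  obtain rfl | hp := hp.eq_or_lt
  · simp
  have hq : 0 < q := hp.trans_le hpq
  have hn : (n : ℝ) ≤ Real.logb b p⁻¹ := by
    rw [Real.le_logb_iff_rpow_le hb (by positivity), Real.rpow_natCast,
      le_inv_comm₀ (by positivity) hp, ← inv_pow]
    exact hpn
  calc n * p ≤ Real.logb b p⁻¹ * p := by gcongr
    _ = p * Real.logb b (q / p) + p * Real.logb b q⁻¹ := by
        rw [Real.logb_div hq.ne' hp.ne', Real.logb_inv, Real.logb_inv]; ring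

lemma logb_two_exp_one_div_exp_one_le_logb_two_three :
    Real.logb 2 (Real.exp 1) / Real.exp 1 ≤ Real.logb 2 3 := by
  have hexp : 1 ≤ Real.exp 1 := Real.one_le_exp zero_le_one
  calc Real.logb 2 (Real.exp 1) / Real.exp 1 ≤ Real.logb 2 (Real.exp 1) :=
        div_le_self (Real.logb_nonneg one_lt_two hexp) hexp
    _ ≤ Real.logb 2 3 :=
        Real.logb_le_logb_of_le one_lt_two (Real.exp_pos 1) Real.exp_one_lt_three.le

section Fibers

variable {Ω α : Type*} [MeasurableSpace Ω] [Countable α]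

lemma measurableSet_eq_of_fibers {X Y : Ω → α} (hX : ∀ x, MeasurableSet {ω | X ω = x})
    (hY : ∀ x, MeasurableSet {ω | Y ω = x}) : MeasurableSet {ω | X ω = Y ω} := by
  have : {ω | X ω = Y ω} = ⋃ x, {ω | X ω = x} ∩ {ω | Y ω = x} := by ext; simp [eq_comm]
  exact this ▸ .iUnion fun x ↦ (hX x).inter (hY x)

lemma tsum_measure_inter_fiber (μ : Measure Ω) {X : Ω → α}
    (hX : ∀ x, MeasurableSet {ω | X ω = x}) (s : Set Ω) :
    ∑' x, μ (s ∩ {ω | X ω = x}) = μ s := by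
  have h := tsum_measure_preimage_singleton (μ := μ.restrict s) Set.countable_univ
    (f := X) fun x _ ↦ hX x
  rw [tsum_univ fun x ↦ μ.restrict s (X ⁻¹' {x}), Set.preimage_univ,
    Measure.restrict_apply_univ] at h
  refine (tsum_congr fun x ↦ ?_).trans h
  rw [Set.inter_comm]
  exact (Measure.restrict_apply (hX x)).symm

end Fibers

section Entropy

variable {Ω α : Type*} [MeasurableSpace Ω] (μ : Measure Ω) [IsFiniteMeasure μ]

lemma measure_mul_entBits_cond {s : Set Ω} (hs : MeasurableSet s) (X : Ω → α) :
    μ s * entBits μ[|s] X = ∑' x, ENNReal.ofReal (μ.real (s ∩ {ω | X ω = x}) *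
      Real.logb 2 (μ.real s / μ.real (s ∩ {ω | X ω = x}))) := by
  rw [entBits, ← ENNReal.tsum_mul_left]
  congr 1 with x
  have hcond : (μ[|s] {ω | X ω = x}).toReal = (μ.real s)⁻¹ * μ.real (s ∩ {ω | X ω = x}) := by
    rw [cond_apply hs, ENNReal.toReal_mul, ENNReal.toReal_inv]
    rfl
  rw [hcond, ← ofReal_measureReal (measure_ne_top μ s), ← ENNReal.ofReal_mul measureReal_nonneg,
    ← mul_neg, ← Real.logb_inv, mul_inv, inv_inv, ← div_eq_mul_inv (μ.real s)]
  obtain h0 | h0 := eq_or_ne (μ.real s) 0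
  · simp [h0]
  · congr 1
    field_simp

lemma measure_mul_entBits_cond_mono {s t : Set Ω} {X : Ω → α} (hs : MeasurableSet s)
    (ht : MeasurableSet t) (hX : ∀ x, MeasurableSet {ω | X ω = x}) (hst : s ⊆ t) :
    μ s * entBits μ[|s] X ≤ μ t * entBits μ[|t] X := by
  rw [measure_mul_entBits_cond μ hs, measure_mul_entBits_cond μ ht]
  refine ENNReal.tsum_le_tsum fun x ↦ ENNReal.ofReal_le_ofReal ?_
  have hinter : μ.real (s ∩ {ω | X ω = x}) ≤ μ.real (t ∩ {ω | X ω = x}) :=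
    measureReal_mono (Set.inter_subset_inter_left _ hst)
  have hdiff : μ.real (s \ {ω | X ω = x}) ≤ μ.real (t \ {ω | X ω = x}) :=
    measureReal_mono (Set.sdiff_subset_sdiff_left hst)
  have hs_split := measureReal_inter_add_sdiff (μ := μ) (s := s) (hX x)
  have ht_split := measureReal_inter_add_sdiff (μ := μ) (s := t) (hX x)
  exact mul_logb_div_le_mul_logb_div one_lt_two measureReal_nonneg
    (measureReal_mono Set.inter_subset_left) hinter (by linarith)

lemma tsum_mul_measure_inter_le [Countable α] {s : Set Ω} {X : Ω → α} {ℓ : α → ℕ}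
    (hs : MeasurableSet s) (hX : ∀ x, MeasurableSet {ω | X ω = x})
    (hℓ : ∀ x, μ (s ∩ {ω | X ω = x}) ≤ 2⁻¹ ^ ℓ x) :
    ∑' x, (ℓ x : ℝ≥0∞) * μ (s ∩ {ω | X ω = x}) ≤
      μ s * entBits μ[|s] X + ENNReal.ofReal (Real.logb 2 (Real.exp 1) / Real.exp 1) := by
  set p : α → ℝ := fun x ↦ μ.real (s ∩ {ω | X ω = x})
  set q : ℝ := μ.real s
  have hμp (x : α) : μ (s ∩ {ω | X ω = x}) = ENNReal.ofReal (p x) := by simp [p]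
  have hterm (x : α) : ℓ x * p x ≤ p x * Real.logb 2 (q / p x) + p x * Real.logb 2 q⁻¹ := by
    refine nat_mul_le_mul_logb_div_add one_lt_two measureReal_nonneg
      (measureReal_mono Set.inter_subset_left) ?_
    simpa [p, Measure.real] using ENNReal.toReal_mono (by finiteness) (hℓ x)
  calc ∑' x, (ℓ x : ℝ≥0∞) * μ (s ∩ {ω | X ω = x})
    _ ≤ ∑' x, (ENNReal.ofReal (p x * Real.logb 2 (q / p x))
          + ENNReal.ofReal (p x) * ENNReal.ofReal (Real.logb 2 q⁻¹)) := by
        gcongr with x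
        rw [hμp, ← ENNReal.ofReal_natCast, ← ENNReal.ofReal_mul (by positivity),
          ← ENNReal.ofReal_mul measureReal_nonneg]
        exact (ENNReal.ofReal_le_ofReal (hterm x)).trans ENNReal.ofReal_add_le
    _ = μ s * entBits μ[|s] X + ENNReal.ofReal (q * Real.logb 2 q⁻¹) := by
        rw [ENNReal.tsum_add, measure_mul_entBits_cond μ hs, ENNReal.tsum_mul_right,
          ENNReal.ofReal_mul measureReal_nonneg, ofReal_measureReal (measure_ne_top μ s)]
        simp_rw [← hμp, tsum_measure_inter_fiber μ hX, p, q]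
    _ ≤ _ := by
        gcongr
        exact mul_logb_inv_le one_lt_two measureReal_nonneg

lemma tsum_mul_measure_eq_and_eq_le [Countable α] {s : Set Ω} {K X : Ω → α} {ℓ : α → ℕ}
    (hs : MeasurableSet s) (hK : ∀ x, MeasurableSet {ω | K ω = x})
    (hX : ∀ x, MeasurableSet {ω | X ω = x}) (hℓ : ∀ x, μ {ω | K ω = x} ≤ 2⁻¹ ^ ℓ x) :
    ∑' x, (ℓ x : ℝ≥0∞) * μ {ω | K ω = x ∧ X ω = x ∧ ω ∈ s} ≤
      μ s * entBits μ[|s] X + ENNReal.ofReal (Real.logb 2 (Real.exp 1) / Real.exp 1) := by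
  set t : Set Ω := s ∩ {ω | K ω = X ω} with ht
  have htm : MeasurableSet t := hs.inter (measurableSet_eq_of_fibers hK hX)
  have hfiber (x : α) : {ω | K ω = x ∧ X ω = x ∧ ω ∈ s} = t ∩ {ω | X ω = x} := by
    ext ω; simp only [ht, Set.mem_inter_iff, Set.mem_ofPred_eq]; grind
  have htℓ (x : α) : μ (t ∩ {ω | X ω = x}) ≤ 2⁻¹ ^ ℓ x :=
    (measure_mono fun _ h ↦ h.1.2.trans h.2).trans (hℓ x)
  simp only [hfiber]
  refine (tsum_mul_measure_inter_le μ htm hX htℓ).trans ?_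
  gcongr ?_ + _
  exact measure_mul_entBits_cond_mono μ htm hs hX Set.inter_subset_left

lemma measure_mul_condEntBits_cond {β : Type*} {s : Set Ω} {W : Ω → β} (hs : MeasurableSet s)
    (hW : ∀ w, MeasurableSet {ω | W ω = w}) (X : Ω → α) :
    μ s * condEntBits μ[|s] X W = ∑' w, μ {ω | W ω = w} *
      (μ[|{ω | W ω = w}] s * entBits (μ[|{ω | W ω = w}])[|s] X) := by
  rw [condEntBits, ← ENNReal.tsum_mul_left]
  congr 1 with w
  rw [← mul_assoc, ← mul_assoc, mul_comm (μ s), mul_comm (μ _), cond_mul_eq_inter hs,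
    cond_mul_eq_inter (hW w), cond_cond_eq_cond_inter hs (hW w),
    cond_cond_eq_cond_inter (hW w) hs, Set.inter_comm]

end Entropy

lemma IsRSBS.measure_prefix_le {Ω : Type*} [MeasurableSpace Ω] {μ : Measure Ω}
    [IsZeroOrProbabilityMeasure μ] {K : Ω → List Bool} (h : IsRSBS μ K) (k : List Bool) :
    μ {ω | k <+: K ω} ≤ 2⁻¹ ^ k.length := by
  induction k using List.reverseRecOn with
  | nil => simpa using prob_le_one
  | append_singleton l b ih =>
    set longer : Set Ω := {ω | l.length < (K ω).length ∧ (K ω).take l.length = l}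
    have hlonger : μ longer ≤ 2⁻¹ ^ l.length :=
      (measure_mono fun _ hω ↦ List.prefix_iff_eq_take.2 hω.2.symm).trans ih
    have hsub : {ω | l ++ [b] <+: K ω} ⊆ longer := by
      rintro ω ⟨u, hu⟩
      simp [longer, ← hu]
    obtain h0 | h0 := eq_or_ne (μ longer) 0
    · simp [measure_mono_null hsub h0]
    · calc μ {ω | l ++ [b] <+: K ω}
        _ ≤ μ {ω | l.length < (K ω).length ∧ (K ω).take (l.length + 1) = l ++ [b]} := by
            refine measure_mono fun ω hω ↦ ⟨(hsub hω).1, ?_⟩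
            simpa using (List.prefix_iff_eq_take.1 hω).symm
        _ = 2⁻¹ * μ longer := h l b (pos_iff_ne_zero.2 h0)
        _ ≤ 2⁻¹ * 2⁻¹ ^ l.length := by gcongr
        _ = 2⁻¹ ^ (l ++ [b]).length := by simp [pow_succ']

lemma IsCondRSBS.cond_measure_eq_le {Ω β : Type*} [MeasurableSpace Ω] {μ : Measure Ω}
    {K : Ω → List Bool} {W : Ω → β} (h : IsCondRSBS μ K W) (w : β) (k : List Bool) :
    μ[|{ω | W ω = w}] {ω | K ω = k} ≤ 2⁻¹ ^ k.length := by
  obtain h0 | h0 := eq_or_ne (μ {ω | W ω = w}) 0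
  · simp [cond_eq_zero_of_meas_eq_zero h0]
  · calc μ[|{ω | W ω = w}] {ω | K ω = k} ≤ μ[|{ω | W ω = w}] {ω | k <+: K ω} :=
          measure_mono fun _ hω ↦ (show K _ = k from hω) ▸ List.prefix_rfl
      _ ≤ 2⁻¹ ^ k.length := (h w (pos_iff_ne_zero.2 h0)).measure_prefix_le k

theorem stmt6_general {Ω α β : Type*} [MeasurableSpace Ω] [Countable α] [Countable β]
    (μ : Measure Ω) [IsProbabilityMeasure μ] {K X : Ω → α} {W : Ω → β} {s : Set Ω} {ℓ : α → ℕ}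
    (hK : ∀ x, MeasurableSet {ω | K ω = x}) (hX : ∀ x, MeasurableSet {ω | X ω = x})
    (hW : ∀ w, MeasurableSet {ω | W ω = w}) (hs : MeasurableSet s)
    (hℓ : ∀ w x, μ[|{ω | W ω = w}] {ω | K ω = x} ≤ 2⁻¹ ^ ℓ x) :
    ∑' x, (ℓ x : ℝ≥0∞) * μ {ω | K ω = x ∧ X ω = x ∧ ω ∈ s} ≤
      μ s * condEntBits μ[|s] X W
        + ENNReal.ofReal (Real.logb 2 (Real.exp 1) / Real.exp 1) := by
  set c := ENNReal.ofReal (Real.logb 2 (Real.exp 1) / Real.exp 1)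
  have hsplit (x : α) : μ {ω | K ω = x ∧ X ω = x ∧ ω ∈ s} =
      ∑' w, μ {ω | W ω = w} * μ[|{ω | W ω = w}] {ω | K ω = x ∧ X ω = x ∧ ω ∈ s} := by
    simp_rw [mul_comm (μ _), cond_mul_eq_inter (hW _), Set.inter_comm {ω | W ω = _},
      tsum_measure_inter_fiber μ hW]
  have hmass : ∑' w, μ {ω | W ω = w} = 1 := by
    simpa using tsum_measure_inter_fiber μ hW Set.univ
  calc ∑' x, (ℓ x : ℝ≥0∞) * μ {ω | K ω = x ∧ X ω = x ∧ ω ∈ s}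
    _ = ∑' w, μ {ω | W ω = w} *
          ∑' x, (ℓ x : ℝ≥0∞) * μ[|{ω | W ω = w}] {ω | K ω = x ∧ X ω = x ∧ ω ∈ s} := by
        simp_rw [hsplit, ← ENNReal.tsum_mul_left]
        rw [ENNReal.tsum_comm]
        simp_rw [mul_left_comm]
    _ ≤ ∑' w, μ {ω | W ω = w} *
          (μ[|{ω | W ω = w}] s * entBits (μ[|{ω | W ω = w}])[|s] X + c) := by
        gcongr with w
        exact tsum_mul_measure_eq_and_eq_le _ hs hK hX (hℓ w)
    _ = μ s * condEntBits μ[|s] X W + c := by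
        simp_rw [mul_add, ENNReal.tsum_add, ENNReal.tsum_mul_right, hmass, one_mul,
          measure_mul_condEntBits_cond μ hs hW]

/-- If `K` is a conditionally randomly-stopped bit sequence given `W`, then
`E[|K|·1{K = K_A = K_B}] ≤ P(K_A = K_B)·H(K_A | W, K_A = K_B) + log₂ 3`, where the
conditional entropy `H(K_A | W, K_A = K_B)` is computed under the conditional measure
given the event `{K_A = K_B}`. -/
theorem stmt6 {Ω β : Type*} [MeasurableSpace Ω] [Countable β]
    (μ : Measure Ω) [IsProbabilityMeasure μ]
    (K KA KB : Ω → List Bool) (W : Ω → β)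
    (hKmeas : ∀ k : List Bool, MeasurableSet {ω | K ω = k})
    (hKAmeas : ∀ k : List Bool, MeasurableSet {ω | KA ω = k})
    (hKBmeas : ∀ k : List Bool, MeasurableSet {ω | KB ω = k})
    (hWmeas : ∀ w : β, MeasurableSet {ω | W ω = w})
    (hcond : IsCondRSBS μ K W) :
    ∑' k : List Bool, (k.length : ℝ≥0∞) * μ {ω | K ω = k ∧ KA ω = k ∧ KB ω = k} ≤
      μ {ω | KA ω = KB ω} * condEntBits (μ[|{ω | KA ω = KB ω}]) KA W
        + ENNReal.ofReal (Real.logb 2 3) := by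
  have hset (k : List Bool) : {ω | K ω = k ∧ KA ω = k ∧ KB ω = k} =
      {ω | K ω = k ∧ KA ω = k ∧ ω ∈ {ω | KA ω = KB ω}} := by
    ext ω; simp only [Set.mem_ofPred_eq]; grind
  simp only [hset]
  refine (stmt6_general μ hKmeas hKAmeas hWmeas (measurableSet_eq_of_fibers hKAmeas hKBmeas)
    hcond.cond_measure_eq_le).trans ?_
  gcongr
  exact logb_two_exp_one_div_exp_one_le_logb_two_three
end

section
/- If K ∈ {0,1}* is a conditionally randomly-stopped bit sequence given a jointly distributed random variable W, then K is (unconditionally) a randomly-stopped bit sequence. -/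
open MeasureTheory ProbabilityTheory
open scoped ENNReal

/-! Let `A` be the event that `K` strictly extends a given prefix and `B ⊆ A` the event that its
next bit is a given `b`. The identity `μ B = 2⁻¹ * μ A` is automatic when `μ A = 0`, so being
randomly stopped is a condition linear in `μ`. It therefore passes from the conditional laws
given `W = w` to their mixture `μ = ∑ w, μ {W = w} • μ[|W = w]`. -/

theorem take_length_eq_of_take_succ_eq_append_singleton {α : Type*} {l pre : List α} {a : α}
    (h : l.take (pre.length + 1) = pre ++ [a]) : l.take pre.length = pre := by
  have hpre : pre <+: l := (List.prefix_append pre [a]).trans (h ▸ List.take_prefix _ l)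
  exact (List.prefix_iff_eq_take.1 hpre).symm

section Measure

variable {Ω β : Type*} [MeasurableSpace Ω] {μ : Measure Ω}

theorem measure_smul_cond {s : Set Ω} (hs : μ s ≠ ∞) : μ s • μ[|s] = μ.restrict s := by
  by_cases h0 : μ s = 0
  · rw [h0, zero_smul, Measure.restrict_eq_zero.2 h0]
  · rw [ProbabilityTheory.cond, smul_smul, ENNReal.mul_inv_cancel h0 hs, one_smul]

theorem sum_restrict_fiber [Countable β] {W : Ω → β}
    (hW : ∀ w, NullMeasurableSet {ω | W ω = w} μ) :
    Measure.sum (fun w ↦ μ.restrict {ω | W ω = w}) = μ := by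
  have hdisj : Pairwise (Function.onFun (AEDisjoint μ) fun w ↦ {ω | W ω = w}) :=
    (pairwise_disjoint_fiber W).aedisjoint
  have hcover : ⋃ w, {ω | W ω = w} = Set.univ := Set.iUnion_eq_univ_iff.2 fun ω ↦ ⟨W ω, rfl⟩
  rw [← Measure.restrict_iUnion_ae hdisj hW, hcover, Measure.restrict_univ]

end Measure

section RandomlyStopped

variable {Ω β ι : Type*} [MeasurableSpace Ω] {μ : Measure Ω} {K : Ω → List Bool} {W : Ω → β}

theorem isRSBS_iff_forall_measure_eq :
    IsRSBS μ K ↔ ∀ (pre : List Bool) (b : Bool),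
      μ {ω | pre.length < (K ω).length ∧ (K ω).take (pre.length + 1) = pre ++ [b]} =
        2⁻¹ * μ {ω | pre.length < (K ω).length ∧ (K ω).take pre.length = pre} := by
  refine ⟨fun h pre b ↦ ?_, fun h pre b _ ↦ h pre b⟩
  rcases eq_zero_or_pos
    (μ {ω | pre.length < (K ω).length ∧ (K ω).take pre.length = pre}) with hnull | hpos
  · rw [hnull, mul_zero]
    refine measure_mono_null ?_ hnull
    rintro ω ⟨hlt, htake⟩
    exact ⟨hlt, take_length_eq_of_take_succ_eq_append_singleton htake⟩
  · exact h pre b hpos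

theorem IsRSBS.smul (h : IsRSBS μ K) (c : ℝ≥0∞) : IsRSBS (c • μ) K := by
  rw [isRSBS_iff_forall_measure_eq] at h ⊢
  intro pre b
  simp only [Measure.smul_apply, smul_eq_mul, h pre b, mul_left_comm]

theorem IsRSBS.sum [Countable ι] {ν : ι → Measure Ω} (h : ∀ i, IsRSBS (ν i) K) :
    IsRSBS (Measure.sum ν) K := by
  simp only [isRSBS_iff_forall_measure_eq] at h ⊢
  intro pre b
  simp only [Measure.sum_apply_of_countable, h _ pre b, ENNReal.tsum_mul_left]

theorem IsRSBS.restrict_of_cond {s : Set Ω} (hs : μ s ≠ ∞) (h : 0 < μ s → IsRSBS (μ[|s]) K) :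
    IsRSBS (μ.restrict s) K := by
  rcases eq_zero_or_pos (μ s) with hnull | hpos
  · simp [IsRSBS, Measure.restrict_eq_zero.2 hnull]
  · exact measure_smul_cond hs ▸ (h hpos).smul (μ s)

end RandomlyStopped

theorem stmt8_general {Ω β : Type*} [MeasurableSpace Ω] [Countable β] (μ : Measure Ω)
    (K : Ω → List Bool) (W : Ω → β) (hWfin : ∀ w, μ {ω | W ω = w} ≠ ∞)
    (hWmeas : ∀ w, NullMeasurableSet {ω | W ω = w} μ) (hcond : IsCondRSBS μ K W) :
    IsRSBS μ K := by
  have hfiber (w : β) : IsRSBS (μ.restrict {ω | W ω = w}) K :=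
    IsRSBS.restrict_of_cond (hWfin w) (hcond w)
  rw [← sum_restrict_fiber hWmeas]
  exact IsRSBS.sum hfiber

/-- A conditionally randomly-stopped bit sequence given `W` is also an (unconditional)
randomly-stopped bit sequence. -/
theorem stmt8 {Ω β : Type*} [MeasurableSpace Ω] [Countable β]
    (μ : Measure Ω) [IsProbabilityMeasure μ]
    (K : Ω → List Bool) (W : Ω → β)
    (hKmeas : ∀ k : List Bool, MeasurableSet {ω | K ω = k})
    (hWmeas : ∀ w : β, MeasurableSet {ω | W ω = w})
    (hcond : IsCondRSBS μ K W) :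
    IsRSBS μ K :=
  stmt8_general μ K W (fun _ ↦ measure_ne_top μ _) (fun w ↦ (hWmeas w).nullMeasurableSet) hcond
end

section
/- Let p be a probability mass function on a countable set 𝒳. Then there exists a function q : 𝒳 → [0,1] such that q(x) ≤ p(x) for all x ∈ 𝒳, ∑_{x∈𝒳} q(x) = 1/2, and every nonzero value of q is an integer power of two (i.e., of the form 2^{-j} for some positive integer j). Consequently, the function x ↦ 2q(x) is a dyadic probability mass function on 𝒳. -/
/-- A probability mass function is dyadic if each of its nonzero values is `2^{-j}` for
some nonnegative integer `j`. -/
def IsDyadicPMF {𝒳 : Type*} (q : 𝒳 → ℝ) : Prop :=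
  (∀ x, 0 ≤ q x) ∧ (∑' x, q x) = 1 ∧ ∀ x, q x ≠ 0 → ∃ j : ℕ, q x = (2 : ℝ) ^ (-(j : ℤ))

/-!
If some `p x` is at least `b⁻¹` (for the theorem, `b = 2`), put all the mass of `q` at that point.
Otherwise round every `p x` down to a power of `b`. This loses a factor less than `b`, so the
rounded masses, all less than `b⁻¹`, still add up to at least `b⁻¹`. If they add up to exactly
`b⁻¹`, they are `q`; if not, finitely many of them already exceed `b⁻¹`, and a subfamily of these,
minimal for having sum at least `b⁻¹`, has sum exactly `b⁻¹`: its smallest term `c` divides `b⁻¹`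
and all its other terms, so the sum of those others, being less than `b⁻¹`, is at most `b⁻¹ - c`.
-/

theorem le_of_mem_zmultiples {G : Type*} [AddCommGroup G] [LinearOrder G] [IsOrderedAddMonoid G]
    {c d : G} (hc : 0 ≤ c) (hd : 0 < d) (h : d ∈ AddSubgroup.zmultiples c) : c ≤ d := by
  obtain ⟨n, rfl⟩ := AddSubgroup.mem_zmultiples_iff.1 h
  have hn : 0 < n := pos_of_smul_pos_right hd hc
  simpa only [zero_add, one_zsmul] using zsmul_le_zsmul_left hc (Int.add_one_le_of_lt hn)

theorem zpow_mem_zmultiples_zpow {K : Type*} [DivisionRing K] {b : ℕ} (hb : (b : K) ≠ 0)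
    {k l : ℤ} (hkl : k ≤ l) : (b : K) ^ l ∈ AddSubgroup.zmultiples ((b : K) ^ k) := by
  obtain ⟨n, rfl⟩ := Int.le.dest hkl
  refine AddSubgroup.mem_zmultiples_iff.2 ⟨(b : ℤ) ^ n, ?_⟩
  rw [zsmul_eq_mul, add_comm, zpow_add₀ hb, zpow_natCast, Int.cast_pow, Int.cast_natCast]

theorem exists_subset_sum_zpow_eq {K : Type*} [Field K] [LinearOrder K] [IsStrictOrderedRing K]
    {ι : Type*} {b : ℕ} (hb : b ≠ 0) (e : ι → ℤ) {m : ℤ} {T : Finset ι}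
    (he : ∀ x ∈ T, e x ≤ m) (hT : (b : K) ^ m ≤ ∑ x ∈ T, (b : K) ^ e x) :
    ∃ S ⊆ T, ∑ x ∈ S, (b : K) ^ e x = (b : K) ^ m := by
  classical
  have hb' : (0 : K) < b := Nat.cast_pos.2 hb.pos
  obtain ⟨S, hST, hS⟩ :=
    exists_minimal_le_of_wellFoundedLT (fun S ↦ (b : K) ^ m ≤ ∑ x ∈ S, (b : K) ^ e x) T hT
  refine ⟨S, hST, le_antisymm ?_ hS.prop⟩
  have hne : S.Nonempty := Finset.nonempty_of_sum_ne_zero ((zpow_pos hb' m).trans_le hS.prop).ne'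
  obtain ⟨a, ha, hmin⟩ := S.exists_min_image e hne
  set c : K := (b : K) ^ e a
  have hlt : ∑ x ∈ S.erase a, (b : K) ^ e x < (b : K) ^ m :=
    not_le.1 (hS.not_prop_of_lt (Finset.erase_ssubset ha))
  have hgap : (b : K) ^ m - ∑ x ∈ S.erase a, (b : K) ^ e x ∈ AddSubgroup.zmultiples c :=
    sub_mem (zpow_mem_zmultiples_zpow hb'.ne' (he a (hST ha)))
      (sum_mem fun x hx ↦ zpow_mem_zmultiples_zpow hb'.ne' (hmin x (Finset.mem_of_mem_erase hx)))
  have hc : c ≤ (b : K) ^ m - ∑ x ∈ S.erase a, (b : K) ^ e x :=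
    le_of_mem_zmultiples (zpow_pos hb' _).le (sub_pos.2 hlt) hgap
  rw [← Finset.add_sum_erase S _ ha]
  exact le_sub_iff_add_le.1 hc

section ZpowFloor

variable {K : Type*} [Field K] [LinearOrder K] [FloorSemiring K] {b : ℕ}

/-- The largest integer power of `b > 1` that is at most `r`, used to round masses down. It is `0`
for `r ≤ 0`, where there is no such power and `Int.log b r` has a junk value. -/
def zpowFloor (b : ℕ) (r : K) : K :=
  if 0 < r then (b : K) ^ Int.log b r else 0

theorem zpowFloor_of_pos {r : K} (hr : 0 < r) : zpowFloor b r = (b : K) ^ Int.log b r :=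
  if_pos hr

theorem zpowFloor_of_nonpos {r : K} (hr : r ≤ 0) : zpowFloor b r = 0 :=
  if_neg hr.not_gt

variable [IsStrictOrderedRing K]

theorem zpowFloor_nonneg (b : ℕ) (r : K) : 0 ≤ zpowFloor b r := by
  unfold zpowFloor
  positivity

theorem zpowFloor_le (hb : 1 < b) {r : K} (hr : 0 ≤ r) : zpowFloor b r ≤ r := by
  rcases hr.eq_or_lt with rfl | hr
  · exact (zpowFloor_of_nonpos le_rfl).le
  · exact (zpowFloor_of_pos hr).trans_le (Int.zpow_log_le_self hb hr)

theorem div_le_zpowFloor (hb : 1 < b) (r : K) : r / b ≤ zpowFloor b r := by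
  have hb' : (0 : K) < b := Nat.cast_pos.2 (zero_lt_one.trans hb)
  rcases le_or_gt r 0 with hr | hr
  · rw [zpowFloor_of_nonpos hr]
    exact div_nonpos_of_nonpos_of_nonneg hr hb'.le
  · rw [zpowFloor_of_pos hr, div_le_iff₀ hb', ← zpow_add_one₀ hb'.ne']
    exact (Int.lt_zpow_succ_log_self hb r).le

theorem exists_zpowFloor_eq_zpow_of_lt (hb : 1 < b) {r : K} {m : ℤ} (hr : r < (b : K) ^ m)
    (h0 : zpowFloor b r ≠ 0) : ∃ k < m, zpowFloor b r = (b : K) ^ k := by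
  have hpos : 0 < r := not_le.1 fun h ↦ h0 (zpowFloor_of_nonpos h)
  exact ⟨Int.log b r, (Int.lt_zpow_iff_log_lt hb hpos).1 hr, zpowFloor_of_pos hpos⟩

end ZpowFloor

theorem exists_hasSum_indicator_zpow {ι : Type*} {b : ℕ} (hb : b ≠ 0) {m : ℤ} {w : ι → ℝ}
    (hw : ∀ x, w x ≠ 0 → ∃ k ≤ m, w x = (b : ℝ) ^ k) (hsum : Summable w)
    (hm : (b : ℝ) ^ m ≤ ∑' x, w x) : ∃ A : Set ι, HasSum (A.indicator w) ((b : ℝ) ^ m) := by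
  classical
  rcases hm.eq_or_lt with heq | hlt
  · exact ⟨Set.univ, by rw [Set.indicator_univ, heq]; exact hsum.hasSum⟩
  obtain ⟨T, hT⟩ := (hsum.hasSum.eventually (lt_mem_nhds hlt)).exists
  choose! e he hwe using hw
  have hfilter : ∑ x ∈ T with w x ≠ 0, (b : ℝ) ^ e x = ∑ x ∈ T, w x := by
    rw [← Finset.sum_filter_ne_zero T]
    exact Finset.sum_congr rfl fun x hx ↦ (hwe x (Finset.mem_filter.1 hx).2).symm
  obtain ⟨S, hST, hS⟩ := exists_subset_sum_zpow_eq hb e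
    (fun x hx ↦ he x (Finset.mem_filter.1 hx).2) (hT.le.trans_eq hfilter.symm)
  have hSw : ∑ x ∈ S, w x = (b : ℝ) ^ m :=
    (Finset.sum_congr rfl fun x hx ↦ hwe x (Finset.mem_filter.1 (hST hx)).2).trans hS
  exact ⟨S, hSw ▸ hasSum_subtype_iff_indicator.1 (S.hasSum w)⟩

theorem exists_le_hasSum_zpow {ι : Type*} {b : ℕ} (hb : 1 < b) {m : ℤ} {p : ι → ℝ}
    (hp0 : ∀ x, 0 ≤ p x) (hsum : Summable p) (hm : (b : ℝ) ^ (m + 1) ≤ ∑' x, p x) :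
    ∃ q : ι → ℝ, (∀ x, 0 ≤ q x) ∧ (∀ x, q x ≤ p x) ∧ HasSum q ((b : ℝ) ^ m) ∧
      ∀ x, q x ≠ 0 → ∃ k ≤ m, q x = (b : ℝ) ^ k := by
  classical
  have hb' : (0 : ℝ) < b := Nat.cast_pos.2 (zero_lt_one.trans hb)
  by_cases hatom : ∃ a, (b : ℝ) ^ m ≤ p a
  · obtain ⟨a, ha⟩ := hatom
    have hq0 : (0 : ι → ℝ) ≤ Pi.single a ((b : ℝ) ^ m) := Pi.single_nonneg.2 (zpow_pos hb' m).le
    have hqp : Pi.single a ((b : ℝ) ^ m) ≤ p := update_le_iff.2 ⟨ha, fun x _ ↦ hp0 x⟩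
    refine ⟨_, hq0, hqp, hasSum_pi_single a _, fun x hx ↦ ⟨m, le_rfl, ?_⟩⟩
    obtain rfl : x = a := by_contra fun hxa ↦ hx (Pi.single_eq_of_ne hxa _)
    exact Pi.single_eq_same x _
  · push Not at hatom
    have hround : ∀ x, zpowFloor b (p x) ≠ 0 → ∃ k ≤ m, zpowFloor b (p x) = (b : ℝ) ^ k :=
      fun x hx ↦ (exists_zpowFloor_eq_zpow_of_lt hb (hatom x) hx).imp fun _ ↦ And.imp_left le_of_lt
    have hsum' : Summable fun x ↦ zpowFloor b (p x) :=
      hsum.of_nonneg_of_le (fun x ↦ zpowFloor_nonneg b _) fun x ↦ zpowFloor_le hb (hp0 x)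
    have hm' : (b : ℝ) ^ m ≤ ∑' x, zpowFloor b (p x) := calc
      (b : ℝ) ^ m ≤ (∑' x, p x) / b := by rwa [le_div_iff₀ hb', ← zpow_add_one₀ hb'.ne']
      _ = ∑' x, p x / b := tsum_div_const.symm
      _ ≤ ∑' x, zpowFloor b (p x) :=
        (hsum.div_const _).tsum_le_tsum (fun x ↦ div_le_zpowFloor hb _) hsum'
    obtain ⟨A, hA⟩ := exists_hasSum_indicator_zpow (zero_lt_one.trans hb).ne' hround hsum' hm'
    refine ⟨_, Set.indicator_nonneg fun x _ ↦ zpowFloor_nonneg b _,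
      Set.indicator_le' (fun x _ ↦ zpowFloor_le hb (hp0 x)) fun x _ ↦ hp0 x, hA, fun x hx ↦ ?_⟩
    rw [Set.indicator_of_mem (Set.mem_of_indicator_ne_zero hx)]
    exact hround x (Set.indicator_apply_ne_zero.1 hx).2

theorem isDyadicPMF_two_mul {ι : Type*} {q : ι → ℝ} (hq0 : ∀ x, 0 ≤ q x)
    (hsum : ∑' x, q x = 1 / 2)
    (hq : ∀ x, q x ≠ 0 → ∃ j : ℕ, 0 < j ∧ q x = (2 : ℝ) ^ (-(j : ℤ))) :
    IsDyadicPMF fun x ↦ 2 * q x := by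
  refine ⟨fun x ↦ mul_nonneg zero_le_two (hq0 x), ?_, fun x hx ↦ ?_⟩
  · rw [tsum_mul_left, hsum, mul_one_div_cancel two_ne_zero]
  · obtain ⟨j, hj, hqj⟩ := hq x (right_ne_zero_of_mul hx)
    refine ⟨j - 1, ?_⟩
    simp only [hqj]
    rw [← zpow_one_add₀ two_ne_zero, Nat.cast_pred hj, neg_sub, sub_eq_add_neg]

theorem stmt9_general {𝒳 : Type*} {b : ℕ} (hb : 1 < b) (p : 𝒳 → ℝ)
    (hp0 : ∀ x, 0 ≤ p x) (hp1 : 1 ≤ ∑' x, p x) :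
    ∃ q : 𝒳 → ℝ, (∀ x, 0 ≤ q x) ∧ (∀ x, q x ≤ p x) ∧ (∑' x, q x) = 1 / b ∧
      ∀ x, q x ≠ 0 → ∃ j : ℕ, 0 < j ∧ q x = (b : ℝ) ^ (-(j : ℤ)) := by
  have hsum : Summable p := by
    by_contra h
    exact zero_lt_one.not_ge (tsum_eq_zero_of_not_summable h ▸ hp1)
  obtain ⟨q, hq0, hqp, hqsum, hq⟩ :=
    exists_le_hasSum_zpow hb (m := -1) hp0 hsum (by rwa [neg_add_cancel, zpow_zero])
  refine ⟨q, hq0, hqp, by rw [hqsum.tsum_eq, zpow_neg_one, one_div], fun x hx ↦ ?_⟩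
  obtain ⟨k, hk, hqk⟩ := hq x hx
  exact ⟨(-k).toNat, by lia, by rw [hqk, Int.toNat_of_nonneg (by lia), neg_neg]⟩

/-- For any probability mass function `p` on a countable set `𝒳`, there exists
`q : 𝒳 → [0,1]` with `q(x) ≤ p(x)` for all `x`, `∑_x q(x) = 1/2`, and every nonzero
value of `q` equal to `2^{-j}` for some positive integer `j`; consequently `2q` is a
dyadic probability mass function on `𝒳`. -/
theorem stmt9 {𝒳 : Type*} [Countable 𝒳] (p : 𝒳 → ℝ)
    (hp0 : ∀ x, 0 ≤ p x) (hp1 : (∑' x, p x) = 1) :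
    ∃ q : 𝒳 → ℝ,
      (∀ x, 0 ≤ q x) ∧ (∀ x, q x ≤ p x) ∧ (∑' x, q x) = 1 / 2 ∧
      (∀ x, q x ≠ 0 → ∃ j : ℕ, 0 < j ∧ q x = (2 : ℝ) ^ (-(j : ℤ))) ∧
      IsDyadicPMF (fun x => 2 * q x) := by
  obtain ⟨q, hq0, hqp, hqsum, hq⟩ := stmt9_general one_lt_two p hp0 hp1.ge
  exact ⟨q, hq0, hqp, hqsum, hq, isDyadicPMF_two_mul hq0 hqsum hq⟩
end

section
/- Let p be a probability mass function on a countable set 𝒳. Then there exists a sequence of dyadic probability mass functions q_1, q_2, q_3, … on 𝒳 such that p(x) = ∑_{w=1}^∞ 2^{-w} q_w(x) for every x ∈ 𝒳. Equivalently, there exists a joint distribution of (X, W) with X having marginal p_X = p and W having marginal distribution Geom(1/2) (i.e., P(W = w) = 2^{-w} for w = 1, 2, …), such that the conditional distribution of X given W = w is dyadic for every w ≥ 1. -/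
/-!
It suffices to write a mass function `p` as `(q + p') / 2` with `q` dyadic and `p'` again a mass
function: iterating on `p'` yields the geometric weights, and the remainder vanishes in the limit.
Such a `q` is any dyadic mass function with `q ≤ 2 p`. To find it, round each `p x` up to a power
of `1/2`; the rounded values `g` satisfy `p ≤ g ≤ 2 p`, so their total mass is at least one. If it
is one, take `q = g`. Otherwise some finite subfamily has mass at least one, and a minimal such
subfamily has mass exactly one: its mass and `1` are both multiples of its least member, and
removing that member drops the mass below `1`.
-/

section SubsetSum

variable {ι M : Type*} [AddCommGroup M] [LinearOrder M] [IsOrderedAddMonoid M]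

lemma le_of_sub_lt_of_mem_zmultiples {a b w : M} (hw : 0 < w)
    (ha : a ∈ AddSubgroup.zmultiples w) (hb : b ∈ AddSubgroup.zmultiples w) (h : b - w < a) :
    b ≤ a := by
  obtain ⟨m, rfl⟩ := AddSubgroup.mem_zmultiples_iff.1 ha
  obtain ⟨n, rfl⟩ := AddSubgroup.mem_zmultiples_iff.1 hb
  rw [sub_eq_add_neg, ← sub_one_zsmul, zsmul_lt_zsmul_iff_left hw] at h
  exact (zsmul_le_zsmul_iff_left hw).2 (Int.sub_one_lt_iff.1 h)

lemma exists_subset_sum_eq_of_le_sum {f : ι → M} {a : M} {F : Finset ι} (ha : 0 ≤ a)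
    (hpos : ∀ i ∈ F, 0 < f i) (hdvd : ∀ i ∈ F, a ∈ AddSubgroup.zmultiples (f i))
    (hchain : ∀ i ∈ F, ∀ k ∈ F, f i ≤ f k → f k ∈ AddSubgroup.zmultiples (f i))
    (hF : a ≤ ∑ i ∈ F, f i) :
    ∃ G ⊆ F, ∑ i ∈ G, f i = a := by
  classical
  obtain ⟨G, hGF, hG⟩ :=
    exists_minimal_le_of_wellFoundedLT (fun G : Finset ι ↦ a ≤ ∑ i ∈ G, f i) F hF
  refine ⟨G, hGF, le_antisymm ?_ hG.prop⟩
  obtain rfl | hne := G.eq_empty_or_nonempty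
  · simpa only [Finset.sum_empty] using ha
  obtain ⟨i, hi, hmin⟩ := G.exists_min_image f hne
  have hsum : ∑ k ∈ G, f k ∈ AddSubgroup.zmultiples (f i) :=
    sum_mem fun k hk ↦ hchain i (hGF hi) k (hGF hk) (hmin k hk)
  have herase : ∑ k ∈ G, f k - f i < a := by
    rw [← Finset.sum_erase_eq_sub hi]
    exact not_le.1 (hG.not_prop_of_lt (Finset.erase_ssubset hi))
  exact le_of_sub_lt_of_mem_zmultiples (hpos i (hGF hi)) (hdvd i (hGF hi)) hsum herase

end SubsetSum

/-- The values allowed in a dyadic probability mass function: zero, or `2 ^ (-j)` with `j : ℕ`.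
The form is that of the last clause of `IsDyadicPMF`. -/
def IsDyadicWeight (t : ℝ) : Prop :=
  t ≠ 0 → ∃ j : ℕ, t = (2 : ℝ) ^ (-(j : ℤ))

namespace IsDyadicWeight

lemma nonneg {t : ℝ} (ht : IsDyadicWeight t) : 0 ≤ t := by
  by_cases h : t = 0
  · exact h.ge
  · obtain ⟨j, rfl⟩ := ht h
    positivity

lemma mem_zmultiples_of_le {s t : ℝ} (hs : IsDyadicWeight s) (ht : IsDyadicWeight t)
    (hs0 : s ≠ 0) (hst : s ≤ t) : t ∈ AddSubgroup.zmultiples s := by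
  have ht0 : t ≠ 0 := (lt_of_lt_of_le (hs.nonneg.lt_of_ne' hs0) hst).ne'
  obtain ⟨j, rfl⟩ := hs hs0
  obtain ⟨k, rfl⟩ := ht ht0
  have hkj : k ≤ j := by
    have := (zpow_le_zpow_iff_right₀ (one_lt_two : (1 : ℝ) < 2)).1 hst
    omega
  refine AddSubgroup.mem_zmultiples_iff.2 ⟨2 ^ (j - k), ?_⟩
  rw [zsmul_eq_mul, Int.cast_pow, Int.cast_ofNat, ← zpow_natCast, ← zpow_add₀ two_ne_zero]
  congr 1
  omega

lemma one_mem_zmultiples {t : ℝ} (ht : IsDyadicWeight t) (h0 : t ≠ 0) :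
    1 ∈ AddSubgroup.zmultiples t := by
  refine ht.mem_zmultiples_of_le (fun _ ↦ ⟨0, by norm_num⟩) h0 ?_
  obtain ⟨j, rfl⟩ := ht h0
  exact zpow_le_one_of_nonpos₀ one_le_two (by omega)

lemma exists_between_self_two_mul {t : ℝ} (h0 : 0 ≤ t) (h1 : t ≤ 1) :
    ∃ s, IsDyadicWeight s ∧ t ≤ s ∧ s ≤ 2 * t := by
  obtain rfl | hpos := h0.eq_or_lt
  · exact ⟨0, fun h ↦ absurd rfl h, le_rfl, by simp⟩
  obtain ⟨j, hlt, hle⟩ :=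
    exists_nat_pow_near_of_lt_one hpos h1 one_half_pos one_half_lt_one
  refine ⟨(1 / 2) ^ j, fun _ ↦ ⟨j, by simp⟩, hle, ?_⟩
  rw [pow_succ] at hlt
  linarith

end IsDyadicWeight

section DyadicFamily

variable {X : Type*} {g : X → ℝ}

lemma exists_finset_subset_sum_eq_one (hg : ∀ x, IsDyadicWeight (g x)) {F : Finset X}
    (hF : 1 ≤ ∑ x ∈ F, g x) : ∃ G ⊆ F, ∑ x ∈ G, g x = 1 := by
  classical
  have hne : ∀ x ∈ F.filter (g · ≠ 0), g x ≠ 0 := fun x hx ↦ (Finset.mem_filter.1 hx).2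
  rw [← Finset.sum_filter_ne_zero] at hF
  obtain ⟨G, hGF, hG⟩ := exists_subset_sum_eq_of_le_sum zero_le_one
    (fun x hx ↦ (hg x).nonneg.lt_of_ne' (hne x hx))
    (fun x hx ↦ (hg x).one_mem_zmultiples (hne x hx))
    (fun x hx y _ hxy ↦ (hg x).mem_zmultiples_of_le (hg y) (hne x hx) hxy) hF
  exact ⟨G, hGF.trans (Finset.filter_subset _ _), hG⟩

lemma exists_isDyadicPMF_indicator (hg : ∀ x, IsDyadicWeight (g x)) (hsum : Summable g)
    (h1 : 1 ≤ ∑' x, g x) : ∃ S : Set X, IsDyadicPMF (S.indicator g) := by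
  suffices h : ∃ S : Set X, ∑' x, S.indicator g x = 1 by
    obtain ⟨S, hS⟩ := h
    refine ⟨S, Set.indicator_nonneg fun x _ ↦ (hg x).nonneg, hS, fun x hx ↦ ?_⟩
    have hxS : x ∈ S := Set.mem_of_indicator_ne_zero hx
    rw [Set.indicator_of_mem hxS] at hx ⊢
    exact hg x hx
  obtain heq | hlt := h1.eq_or_lt
  · exact ⟨Set.univ, by simpa only [Set.indicator_univ] using heq.symm⟩
  · obtain ⟨F, hF⟩ := (hsum.hasSum.eventually_const_lt hlt).exists
    obtain ⟨G, -, hG⟩ := exists_finset_subset_sum_eq_one hg hF.le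
    exact ⟨G, by rw [← hG, sum_eq_tsum_indicator]⟩

end DyadicFamily

/-- A real-valued probability mass function on an arbitrary type. The total mass is stated with
`HasSum`, so that summability is part of the notion. -/
structure IsMassFunction {X : Type*} (p : X → ℝ) : Prop where
  nonneg : ∀ x, 0 ≤ p x
  hasSum : HasSum p 1

section MassFunction

variable {X : Type*} {p q : X → ℝ}

lemma isMassFunction_of_tsum_eq_one (h0 : ∀ x, 0 ≤ p x) (h1 : ∑' x, p x = 1) :
    IsMassFunction p := by
  have hsum : Summable p := by
    by_contra h
    exact zero_ne_one ((tsum_eq_zero_of_not_summable h).symm.trans h1)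
  exact ⟨h0, h1 ▸ hsum.hasSum⟩

namespace IsMassFunction

lemma le_one (hp : IsMassFunction p) (x : X) : p x ≤ 1 :=
  le_hasSum hp.hasSum x fun y _ ↦ hp.nonneg y

lemma two_mul_sub (hp : IsMassFunction p) (hq : IsMassFunction q) (hle : ∀ x, q x ≤ 2 * p x) :
    IsMassFunction fun x ↦ 2 * p x - q x where
  nonneg x := sub_nonneg.2 (hle x)
  hasSum := by
    have h := (hp.hasSum.mul_left 2).sub hq.hasSum
    rwa [show (2 * 1 - 1 : ℝ) = 1 by norm_num] at h

lemma exists_isDyadicPMF_le_two_mul (hp : IsMassFunction p) :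
    ∃ q : X → ℝ, IsDyadicPMF q ∧ ∀ x, q x ≤ 2 * p x := by
  choose g hg hpg hgp using fun x ↦
    IsDyadicWeight.exists_between_self_two_mul (hp.nonneg x) (hp.le_one x)
  have hsum : Summable g :=
    .of_nonneg_of_le (fun x ↦ (hg x).nonneg) hgp (hp.hasSum.summable.mul_left 2)
  obtain ⟨S, hS⟩ := exists_isDyadicPMF_indicator hg hsum (hasSum_le hpg hp.hasSum hsum.hasSum)
  exact ⟨S.indicator g, hS, fun x ↦
    (Set.indicator_le_self' (fun y _ ↦ (hg y).nonneg) x).trans (hgp x)⟩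

lemma exists_eq_half_dyadic_add (hp : IsMassFunction p) :
    ∃ q p' : X → ℝ, IsDyadicPMF q ∧ IsMassFunction p' ∧ ∀ x, p x = 1 / 2 * (q x + p' x) := by
  obtain ⟨q, hq, hle⟩ := hp.exists_isDyadicPMF_le_two_mul
  exact ⟨q, _, hq, hp.two_mul_sub (isMassFunction_of_tsum_eq_one hq.1 hq.2.1) hle,
    fun x ↦ by ring⟩

end IsMassFunction

end MassFunction

lemma hasSum_pow_smul_of_eq_smul_add {𝕜 E : Type*} [NormedField 𝕜] [NormedAddCommGroup E]
    [NormedSpace 𝕜 E] [CompleteSpace E] {c : 𝕜} {q r : ℕ → E} {C : ℝ} (hc : ‖c‖ < 1)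
    (hr : ∀ n, ‖r n‖ ≤ C) (hrec : ∀ n, r n = c • (q n + r (n + 1))) :
    HasSum (fun n ↦ c ^ (n + 1) • q n) (r 0) := by
  have hsum : Summable fun n ↦ c ^ n • r n := by
    refine .of_norm_bounded ((summable_geometric_of_lt_one (norm_nonneg c) hc).mul_right C)
      fun n ↦ ?_
    rw [norm_smul, norm_pow]
    gcongr
    exact hr n
  have htail := (hasSum_nat_add_iff' 1).2 hsum.hasSum
  have hterm (n : ℕ) : c ^ (n + 1) • q n = c ^ n • r n - c ^ (n + 1) • r (n + 1) := by
    rw [hrec n, smul_smul, ← pow_succ, smul_add, add_sub_cancel_right]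
  simpa [hterm] using hsum.hasSum.sub htail

theorem stmt11_general {𝒳 : Type*} (p : 𝒳 → ℝ)
    (hp0 : ∀ x, 0 ≤ p x) (hp1 : (∑' x, p x) = 1) :
    ∃ q : ℕ → 𝒳 → ℝ,
      (∀ w : ℕ, IsDyadicPMF (q w)) ∧
      ∀ x, HasSum (fun w : ℕ ↦ ((1 : ℝ) / 2) ^ (w + 1) * q w x) (p x) := by
  choose! q next hq hnext hsplit using
    fun (r : 𝒳 → ℝ) (hr : IsMassFunction r) ↦ hr.exists_eq_half_dyadic_add
  have hr (w : ℕ) : IsMassFunction (next^[w] p) :=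
    Function.Iterate.rec IsMassFunction (isMassFunction_of_tsum_eq_one hp0 hp1) hnext w
  refine ⟨fun w ↦ q (next^[w] p), fun w ↦ hq _ (hr w), fun x ↦ ?_⟩
  refine hasSum_pow_smul_of_eq_smul_add (c := (1 / 2 : ℝ)) (q := fun w ↦ q (next^[w] p) x)
    (r := fun w ↦ next^[w] p x) (C := 1) (by norm_num) (fun w ↦ ?_) fun w ↦ ?_
  · rw [Real.norm_of_nonneg ((hr w).nonneg x)]
    exact (hr w).le_one x
  · rw [Function.iterate_succ_apply']
    exact hsplit _ (hr w) x

/-- Any probability mass function `p` on a countable set `𝒳` is a mixture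
`p(x) = ∑_{w=1}^∞ 2^{-w} q_w(x)` of dyadic probability mass functions `q_w`, with
geometric weights `2^{-w}`. (Here `q w` plays the role of `q_{w+1}`, so the weight of
`q w` is `2^{-(w+1)}` for `w = 0, 1, 2, …`.) Equivalently, there is a joint distribution
`(X, W)` with `X ~ p`, `W ~ Geom(1/2)`, and the conditional distribution of `X` given
`W = w` dyadic for every `w ≥ 1`. -/
theorem stmt11 {𝒳 : Type*} [Countable 𝒳] (p : 𝒳 → ℝ)
    (hp0 : ∀ x, 0 ≤ p x) (hp1 : (∑' x, p x) = 1) :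
    ∃ q : ℕ → 𝒳 → ℝ,
      (∀ w : ℕ, IsDyadicPMF (q w)) ∧
      ∀ x, p x = ∑' w : ℕ, ((1 : ℝ) / 2) ^ (w + 1) * q w x := by
  obtain ⟨q, hq, hsum⟩ := stmt11_general p hp0 hp1
  exact ⟨q, hq, fun x ↦ (hsum x).tsum_eq.symm⟩
end

section
/- Let X be a random variable taking values in a countable set 𝒳 with finite Shannon entropy H(X). Then there exist a random variable W jointly distributed with X such that W ~ Geom(1/2) (i.e., P(W = w) = 2^{-w} for w = 1, 2, …), and functions f_w : 𝒳 → {0,1}* for each w ≥ 1, such that the random string K := f_W(X) is a conditionally randomly-stopped bit sequence given W, K = f_W(X) determines X given W on the support (i.e., x ↦ f_w(x) is injective on the support of the conditional distribution of X given W = w, for each w), and E[|K|] ≥ H(X) − 2. -/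
open MeasureTheory ProbabilityTheory
open scoped ENNReal

/-! Any probability mass function `p` dominates half of a dyadic law `d`: round every `p x` up to a
power of two and keep a subset of the rounded masses that sums to exactly one. Splitting off `d / 2`
leaves half of another probability mass function, so iterating writes
`p = ∑ j, 2⁻¹ ^ (j + 1) * d j`, the law of `X` when `W` is geometric and `d j` is the law of `X`
given `W = j + 1`. A dyadic law has a complete binary code tree in which a symbol of mass `2⁻¹ ^ n`
sits at depth `n`, so given `W` the codeword `K` of `X` is a stopped sequence of fair bits from
which `X` can be read off. Hence `H(X) ≤ H(X, W) = H(W) + E|K| = 2 + E|K|`. -/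

theorem sum_two_inv_pow_eq_natCast_div {Y : Type*} {l : Y → ℕ} {S : Finset Y} {n : ℕ}
    (hn : ∀ x ∈ S, l x ≤ n) :
    ∑ x ∈ S, (2⁻¹ : ℝ≥0∞) ^ l x = (∑ x ∈ S, 2 ^ (n - l x) : ℕ) / 2 ^ n := by
  rw [Nat.cast_sum, div_eq_mul_inv, Finset.sum_mul]
  refine Finset.sum_congr rfl fun x hx => ?_
  calc (2⁻¹ : ℝ≥0∞) ^ l x = (2 * 2⁻¹) ^ (n - l x) * 2⁻¹ ^ l x := by
        rw [ENNReal.mul_inv_cancel two_ne_zero ENNReal.ofNat_ne_top, one_pow, one_mul]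
    _ = 2 ^ (n - l x) * 2⁻¹ ^ n := by
        rw [mul_pow, mul_assoc, ← pow_add, Nat.sub_add_cancel (hn x hx)]
    _ = (2 ^ (n - l x) : ℕ) * (2 ^ n)⁻¹ := by
        rw [ENNReal.inv_pow, Nat.cast_pow, Nat.cast_ofNat]

theorem exists_subset_sum_two_inv_pow_eq_one {Y : Type*} (l : Y → ℕ) {T : Finset Y}
    (hT : 1 ≤ ∑ x ∈ T, (2⁻¹ : ℝ≥0∞) ^ l x) :
    ∃ S ⊆ T, ∑ x ∈ S, (2⁻¹ : ℝ≥0∞) ^ l x = 1 := by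
  classical
  obtain ⟨S, hST, hS⟩ := exists_minimal_le_of_wellFoundedLT
    (fun S : Finset Y => 1 ≤ ∑ x ∈ S, (2⁻¹ : ℝ≥0∞) ^ l x) T hT
  refine ⟨S, hST, hS.prop.antisymm' ?_⟩
  have hne : S.Nonempty := by
    rw [Finset.nonempty_iff_ne_empty]
    rintro rfl
    simpa using hS.prop
  obtain ⟨m, hm, hmax⟩ := S.exists_max_image l hne
  have hpow0 : (2 : ℝ≥0∞) ^ l m ≠ 0 := pow_ne_zero _ two_ne_zero
  have hpow : (2 : ℝ≥0∞) ^ l m ≠ ⊤ := ENNReal.pow_ne_top ENNReal.ofNat_ne_top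
  -- Erasing the lightest term lowers the numerator over `2 ^ l m` by exactly one.
  have herase : ∑ x ∈ S.erase m, 2 ^ (l m - l x) < 2 ^ l m := by
    by_contra! hge
    refine hS.not_prop_of_lt (Finset.erase_ssubset hm) ?_
    rw [sum_two_inv_pow_eq_natCast_div fun x hx => hmax x (Finset.mem_of_mem_erase hx),
      ENNReal.le_div_iff_mul_le (.inl hpow0) (.inl hpow), one_mul]
    exact_mod_cast hge
  have hnum : ∑ x ∈ S, 2 ^ (l m - l x) ≤ 2 ^ l m := by
    rw [← Finset.sum_erase_add _ _ hm, Nat.sub_self, pow_zero]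
    exact herase
  rw [sum_two_inv_pow_eq_natCast_div hmax]
  refine ENNReal.div_le_of_le_mul ?_
  rw [one_mul]
  exact_mod_cast hnum

theorem exists_bool_sum_two_inv_pow_eq_one {Y : Type*} {l : Y → ℕ} {S : Finset Y}
    (hS : ∑ x ∈ S, (2⁻¹ : ℝ≥0∞) ^ l x = 2) :
    ∃ b : Y → Bool, ∀ a, ∑ x ∈ S with b x = a, (2⁻¹ : ℝ≥0∞) ^ l x = 1 := by
  classical
  obtain ⟨R, hRS, hR⟩ := exists_subset_sum_two_inv_pow_eq_one l (hS ▸ one_le_two)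
  have hrest : ∑ x ∈ S \ R, (2⁻¹ : ℝ≥0∞) ^ l x = 1 := by
    have hsplit := Finset.sum_sdiff (f := fun x => (2⁻¹ : ℝ≥0∞) ^ l x) hRS
    rw [hS, hR] at hsplit
    exact (ENNReal.add_left_inj ENNReal.one_ne_top).mp (hsplit.trans one_add_one_eq_two.symm)
  refine ⟨fun x => decide (x ∈ R), fun a => ?_⟩
  cases a
  · simpa [← Finset.sdiff_eq_filter] using hrest
  · simpa [Finset.filter_mem_eq_inter, Finset.inter_eq_right.mpr hRS] using hR

theorem eq_singleton_of_sum_two_inv_pow_eq_one {Y : Type*} {l : Y → ℕ} {S : Finset Y} {x : Y}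
    (hS : ∑ y ∈ S, (2⁻¹ : ℝ≥0∞) ^ l y = 1) (hx : x ∈ S) (hlx : l x = 0) : S = {x} := by
  classical
  rw [← Finset.add_sum_erase S _ hx, hlx, pow_zero] at hS
  have hrest := (ENNReal.add_right_inj ENNReal.one_ne_top).mp (hS.trans (add_zero 1).symm)
  rw [Finset.eq_singleton_iff_unique_mem]
  refine ⟨hx, fun y hy => ?_⟩
  by_contra hyx
  have hpow := Finset.sum_eq_zero_iff.mp hrest y (Finset.mem_erase.mpr ⟨hyx, hy⟩)
  simp at hpow

theorem sum_two_inv_pow_sub_one {Y : Type*} {l : Y → ℕ} {S : Finset Y}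
    (hl : ∀ x ∈ S, l x ≠ 0) :
    ∑ x ∈ S, (2⁻¹ : ℝ≥0∞) ^ (l x - 1) = 2 * ∑ x ∈ S, 2⁻¹ ^ l x := by
  rw [Finset.mul_sum]
  refine Finset.sum_congr rfl fun x hx => ?_
  rw [← mul_pow_sub_one (hl x hx) (2⁻¹ : ℝ≥0∞), ← mul_assoc,
    ENNReal.mul_inv_cancel two_ne_zero ENNReal.ofNat_ne_top, one_mul]

theorem exists_lt_two_inv_pow_le {a : ℝ≥0∞} (h0 : a ≠ 0) (h1 : a < 1) :
    ∃ n : ℕ, a < 2⁻¹ ^ n ∧ 2⁻¹ ^ n ≤ 2 * a := by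
  obtain ⟨z, hz, hz'⟩ := ENNReal.exists_mem_Ico_zpow h0 h1.ne_top ENNReal.one_lt_two
    ENNReal.ofNat_ne_top
  have hzneg : z < 0 := by
    by_contra! hz0
    have hone : (1 : ℝ≥0∞) ≤ 2 ^ z := by simpa using ENNReal.zpow_le_of_le one_le_two hz0
    exact h1.not_ge (hone.trans hz)
  obtain ⟨n, rfl⟩ := Int.eq_negSucc_of_lt_zero hzneg
  have hsucc : (2 : ℝ≥0∞) ^ (Int.negSucc n + 1) = 2⁻¹ ^ n := by
    rw [Int.negSucc_eq, neg_add_rev, neg_add_cancel_comm, ENNReal.zpow_neg, zpow_natCast,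
      ENNReal.inv_pow]
  refine ⟨n, hsucc ▸ hz', ?_⟩
  rw [← hsucc, ENNReal.zpow_add two_ne_zero ENNReal.ofNat_ne_top, zpow_one, mul_comm]
  gcongr

theorem tsum_two_inv_pow_succ : ∑' j : ℕ, (2⁻¹ : ℝ≥0∞) ^ (j + 1) = 1 := by
  rw [ENNReal.tsum_geometric_add_one, ENNReal.one_sub_inv_two, inv_inv,
    ENNReal.inv_mul_cancel two_ne_zero ENNReal.ofNat_ne_top]

theorem tsum_two_inv_pow_succ_mul : ∑' j : ℕ, (2⁻¹ : ℝ≥0∞) ^ (j + 1) * (j + 1 : ℕ) = 2 := by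
  have hreal : HasSum (fun n : ℕ => (n : ℝ) * 2⁻¹ ^ n) 2 := by
    have h := hasSum_coe_mul_geometric_of_norm_lt_one (𝕜 := ℝ) (r := 2⁻¹) (by norm_num)
    rwa [show (2⁻¹ : ℝ) / (1 - 2⁻¹) ^ 2 = 2 by norm_num] at h
  have hennreal : ∑' n : ℕ, (2⁻¹ : ℝ≥0∞) ^ n * n = 2 := by
    have htsum := ENNReal.ofReal_tsum_of_nonneg (fun n => by positivity) hreal.summable
    rw [hreal.tsum_eq, ENNReal.ofReal_ofNat] at htsum
    refine (tsum_congr fun n => ?_).trans htsum.symm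
    rw [ENNReal.ofReal_mul n.cast_nonneg, ENNReal.ofReal_natCast,
      ENNReal.ofReal_pow (by positivity), ENNReal.ofReal_inv_of_pos two_pos,
      ENNReal.ofReal_ofNat, mul_comm]
  rwa [tsum_eq_zero_add' ENNReal.summable, Nat.cast_zero, mul_zero, zero_add] at hennreal

theorem exists_finset_one_lt_sum {Y : Type*} (p : PMF Y) {g : Y → ℝ≥0∞}
    (hg : ∀ x ∈ p.support, p x < g x) :
    ∃ T : Finset Y, ↑T ⊆ p.support ∧ 1 < ∑ x ∈ T, g x := by
  classical
  obtain ⟨x₀, hx₀⟩ := p.support_nonempty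
  have hle : ∀ x, p x ≤ p.support.indicator g x := fun x => by
    by_cases hx : x ∈ p.support
    · rw [Set.indicator_of_mem hx]
      exact (hg x hx).le
    · rw [(p.apply_eq_zero_iff x).mpr hx]
      exact zero_le
  have hlt : 1 < ∑' x, p.support.indicator g x := by
    rw [← p.tsum_coe]
    exact ENNReal.tsum_lt_tsum p.tsum_coe_ne_top hle
      ((hg x₀ hx₀).trans_eq (Set.indicator_of_mem hx₀ g).symm)
  obtain ⟨T, hT⟩ := (ENNReal.summable.hasSum.eventually (lt_mem_nhds hlt)).exists
  refine ⟨{x ∈ T | x ∈ p.support}, fun x hx => (Finset.mem_filter.mp hx).2, ?_⟩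
  simpa only [Finset.sum_filter, Set.indicator_apply] using hT

theorem exists_sum_two_inv_pow_eq_one_of_pmf {Y : Type*} (p : PMF Y) :
    ∃ (S : Finset Y) (l : Y → ℕ),
      ∑ x ∈ S, (2⁻¹ : ℝ≥0∞) ^ l x = 1 ∧ ∀ x ∈ S, 2⁻¹ ^ l x ≤ 2 * p x := by
  by_cases hatom : ∃ x, p x = 1
  · obtain ⟨x, hx⟩ := hatom
    exact ⟨{x}, 0, by simp, by simp [hx]⟩
  push Not at hatom
  have hexp : ∀ x ∈ p.support, ∃ n : ℕ, p x < 2⁻¹ ^ n ∧ 2⁻¹ ^ n ≤ 2 * p x := fun x hx =>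
    exists_lt_two_inv_pow_le hx ((p.coe_le_one x).lt_of_ne (hatom x))
  choose! l hl hl' using hexp
  obtain ⟨T, hT, hlt⟩ := exists_finset_one_lt_sum p hl
  obtain ⟨S, hST, hS⟩ := exists_subset_sum_two_inv_pow_eq_one l hlt.le
  exact ⟨S, l, hS, fun x hx => hl' x (hT (hST hx))⟩

section PrefixMass

variable {Y : Type*} {S : Finset Y} {c c' : Y → List Bool}

/-- The total mass of the codewords `c x`, `x ∈ S`, that extend `u`, when a codeword of length `n`
has mass `2⁻¹ ^ n`. It is the probability that a random codeword starts with `u`. -/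
noncomputable def prefixMass (S : Finset Y) (c : Y → List Bool) (u : List Bool) : ℝ≥0∞ :=
  ∑ x ∈ S with u <+: c x, 2⁻¹ ^ (c x).length

theorem prefixMass_nil : prefixMass S c [] = ∑ x ∈ S, 2⁻¹ ^ (c x).length := by
  simp [prefixMass]

theorem prefixMass_congr (h : ∀ x ∈ S, c x = c' x) (u : List Bool) :
    prefixMass S c u = prefixMass S c' u := by
  simp only [prefixMass, Finset.sum_filter]
  exact Finset.sum_congr rfl fun x hx => by rw [h x hx]

theorem prefixMass_cons (b : Y → Bool) (t : Y → List Bool) (a : Bool) (u : List Bool) :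
    prefixMass S (fun x => b x :: t x) (a :: u) = 2⁻¹ * prefixMass {x ∈ S | b x = a} t u := by
  simp only [prefixMass, List.cons_prefix_cons, Finset.filter_filter, Finset.mul_sum,
    List.length_cons, pow_succ', eq_comm]

theorem prefixMass_nil_eq_add (hc : ∀ x ∈ S, c x ≠ []) :
    prefixMass S c [] = prefixMass S c [false] + prefixMass S c [true] := by
  simp only [prefixMass, Finset.sum_filter, ← Finset.sum_add_distrib]
  refine Finset.sum_congr rfl fun x hx => ?_
  obtain ⟨b, t, h⟩ := List.exists_cons_of_ne_nil (hc x hx)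
  cases b <;> simp [h]

end PrefixMass

/-- A finite code on the symbols in `support` whose codewords, drawn with the dyadic masses
`2⁻¹ ^ |code x|`, form a randomly-stopped bit sequence. That last property is the field
`balanced`: after any string `u`, continuing with `0` and continuing with `1` are equally likely. -/
structure CompleteCode (Y : Type*) where
  support : Finset Y
  code : Y → List Bool
  injOn : Set.InjOn code support
  prefixMass_nil : prefixMass support code [] = 1
  balanced : ∀ u : List Bool,
    prefixMass support code (u ++ [false]) = prefixMass support code (u ++ [true])

namespace CompleteCode

variable {Y : Type*}

/-- The code of a single symbol by the empty string. -/
def singleton (x : Y) : CompleteCode Y where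
  support := {x}
  code _ := []
  injOn := by simp
  prefixMass_nil := by simp [prefixMass]
  balanced u := by simp [prefixMass]

/-- The code that writes the bit `b x` and then the codeword of `x` in the code `C (b x)`: the tree
with the two given codes as subtrees of its root. -/
def branch (S : Finset Y) (b : Y → Bool) (C : Bool → CompleteCode Y)
    (hC : ∀ a, (C a).support = {x ∈ S | b x = a}) : CompleteCode Y :=
  have hcons (a : Bool) (u : List Bool) :
      prefixMass S (fun x => b x :: (C (b x)).code x) (a :: u) =
        2⁻¹ * prefixMass (C a).support (C a).code u := by
    rw [prefixMass_cons, hC, prefixMass_congr fun x hx => by rw [(Finset.mem_filter.mp hx).2]]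
  { support := S
    code := fun x => b x :: (C (b x)).code x
    injOn := by
      intro x hx y hy hxy
      obtain ⟨hb, ht⟩ := List.cons_eq_cons.mp hxy
      rw [← hb] at ht
      exact (C (b x)).injOn (by simpa [hC] using hx) (by simpa [hC, hb] using hy) ht
    prefixMass_nil := by
      rw [prefixMass_nil_eq_add fun x _ => List.cons_ne_nil _ _, hcons, hcons,
        (C false).prefixMass_nil, (C true).prefixMass_nil, mul_one, ENNReal.inv_two_add_inv_two]
    balanced := by
      rintro (_ | ⟨a, u⟩)
      · simp only [List.nil_append, hcons, (C _).prefixMass_nil]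
      · simp only [List.cons_append, hcons, (C a).balanced u] }

theorem exists_of_sum_eq_one {S : Finset Y} {l : Y → ℕ}
    (hS : ∑ x ∈ S, (2⁻¹ : ℝ≥0∞) ^ l x = 1) :
    ∃ C : CompleteCode Y, C.support = S ∧ ∀ x ∈ S, (C.code x).length = l x := by
  classical
  obtain ⟨N, hN⟩ : ∃ N, ∀ x ∈ S, l x < N :=
    ⟨S.sup l + 1, fun x hx => Nat.lt_succ_of_le (Finset.le_sup hx)⟩
  induction N generalizing S l with
  | zero =>
    rw [Finset.eq_empty_of_forall_notMem fun x hx => Nat.not_lt_zero _ (hN x hx)] at hS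
    simp at hS
  | succ N ih =>
    by_cases hzero : ∃ x ∈ S, l x = 0
    · obtain ⟨x, hx, hlx⟩ := hzero
      obtain rfl := eq_singleton_of_sum_two_inv_pow_eq_one hS hx hlx
      exact ⟨singleton x, rfl, by simp [singleton, hlx]⟩
    · push Not at hzero
      obtain ⟨b, hb⟩ := exists_bool_sum_two_inv_pow_eq_one
        (show ∑ x ∈ S, 2⁻¹ ^ (l x - 1) = 2 by rw [sum_two_inv_pow_sub_one hzero, hS, mul_one])
      choose C hC hlen using fun a => ih (hb a) fun x hx => by
        have := hzero x (Finset.mem_of_mem_filter x hx)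
        have := hN x (Finset.mem_of_mem_filter x hx)
        omega
      refine ⟨branch S b C hC, rfl, fun x hx => ?_⟩
      calc ((C (b x)).code x).length + 1 = l x - 1 + 1 := by
            rw [hlen _ x (Finset.mem_filter.mpr ⟨hx, rfl⟩)]
        _ = l x := Nat.succ_pred_eq_of_ne_zero (hzero x hx)

open scoped Classical in
/-- The law of a symbol whose codeword `k` is drawn with probability `2⁻¹ ^ |k|`. -/
noncomputable def toPMF (C : CompleteCode Y) : PMF Y :=
  PMF.ofFinset (fun x => if x ∈ C.support then 2⁻¹ ^ (C.code x).length else 0) C.support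
    (by rw [← C.prefixMass_nil, _root_.prefixMass_nil]
        exact Finset.sum_congr rfl fun x hx => if_pos hx)
    (fun _ hx => if_neg hx)

variable (C : CompleteCode Y) {x : Y}

theorem toPMF_of_mem (hx : x ∈ C.support) : C.toPMF x = 2⁻¹ ^ (C.code x).length := if_pos hx

theorem mem_support_of_toPMF_ne_zero (hx : C.toPMF x ≠ 0) : x ∈ C.support := by
  by_contra h
  exact hx (if_neg h)

theorem toOuterMeasure_prefix (u : List Bool) :
    C.toPMF.toOuterMeasure {x | u <+: C.code x} = prefixMass C.support C.code u := by
  rw [PMF.toOuterMeasure_apply, tsum_eq_sum (s := C.support), prefixMass, Finset.sum_filter]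
  · refine Finset.sum_congr rfl fun x hx => ?_
    simp [Set.indicator, C.toPMF_of_mem hx]
  · intro x hx
    exact Set.indicator_apply_eq_zero.mpr fun _ => if_neg hx

theorem exists_toPMF_le (p : PMF Y) : ∃ C : CompleteCode Y, ∀ x, C.toPMF x ≤ 2 * p x := by
  obtain ⟨S, l, hS, hle⟩ := exists_sum_two_inv_pow_eq_one_of_pmf p
  obtain ⟨C, rfl, hlen⟩ := exists_of_sum_eq_one hS
  refine ⟨C, fun x => ?_⟩
  by_cases hx : x ∈ C.support
  · rw [C.toPMF_of_mem hx, hlen x hx]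
    exact hle x hx
  · exact (if_neg hx).trans_le zero_le

end CompleteCode

section Mixture

variable {Y : Type*}

/-- The joint law of `(J, X)` where `P(J = j) = 2⁻¹ ^ (j + 1)` and, given `J = j`, the law of `X`
is `q j`. The geometric variable is `J + 1`. -/
noncomputable def geometricMixture (q : ℕ → PMF Y) : PMF (ℕ × Y) :=
  ⟨fun z => 2⁻¹ ^ (z.1 + 1) * q z.1 z.2, by
    have hsum : ∑' z : ℕ × Y, (2⁻¹ : ℝ≥0∞) ^ (z.1 + 1) * q z.1 z.2 = 1 := by
      simp only [ENNReal.tsum_prod', ENNReal.tsum_mul_left, PMF.tsum_coe, mul_one,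
        tsum_two_inv_pow_succ]
    exact hsum ▸ ENNReal.summable.hasSum⟩

theorem geometricMixture_apply (q : ℕ → PMF Y) (j : ℕ) (x : Y) :
    geometricMixture q (j, x) = 2⁻¹ ^ (j + 1) * q j x := rfl

theorem geometricMixture_toOuterMeasure_fst_eq_and_snd_mem (q : ℕ → PMF Y) (j : ℕ) (A : Set Y) :
    (geometricMixture q).toOuterMeasure {z | z.1 = j ∧ z.2 ∈ A} =
      2⁻¹ ^ (j + 1) * (q j).toOuterMeasure A := by
  classical
  rw [PMF.toOuterMeasure_apply, PMF.toOuterMeasure_apply, ENNReal.tsum_prod',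
    tsum_eq_single j fun i hi => by simp [hi], ← ENNReal.tsum_mul_left]
  simp [Set.indicator_apply, geometricMixture_apply]

theorem geometricMixture_toOuterMeasure_snd_eq (q : ℕ → PMF Y) (x : Y) :
    (geometricMixture q).toOuterMeasure {z | z.2 = x} = ∑' j, 2⁻¹ ^ (j + 1) * q j x := by
  classical
  rw [PMF.toOuterMeasure_apply, ENNReal.tsum_prod']
  refine tsum_congr fun j => ?_
  rw [tsum_eq_single x fun y hy => by simp [hy]]
  simp [geometricMixture_apply]

/-- The law left over when mass `q / 2` is taken out of `p` and the remainder is renormalised. -/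
noncomputable def residualPMF (p q : PMF Y) (h : ∀ x, q x ≤ 2 * p x) : PMF Y :=
  ⟨fun x => 2 * p x - q x, by
    have hsum : ∑' x, (2 * p x - q x) + 1 = 1 + 1 := by
      rw [← q.tsum_coe, ← ENNReal.tsum_add, tsum_congr fun x => tsub_add_cancel_of_le (h x),
        ENNReal.tsum_mul_left, p.tsum_coe, q.tsum_coe, mul_one, one_add_one_eq_two]
    exact (ENNReal.add_left_inj ENNReal.one_ne_top).mp hsum ▸ ENNReal.summable.hasSum⟩

theorem residualPMF_add (p q : PMF Y) (h : ∀ x, q x ≤ 2 * p x) (x : Y) :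
    q x + residualPMF p q h x = 2 * p x := add_tsub_cancel_of_le (h x)

/-- Greedy expansion: split off half of a law of the family, renormalise, and repeat. -/
theorem exists_eq_tsum_two_inv_pow_mul {ι : Type*} {r : ι → PMF Y}
    (hr : ∀ p : PMF Y, ∃ i, ∀ x, r i x ≤ 2 * p x) (p : PMF Y) :
    ∃ i : ℕ → ι, ∀ x, p x = ∑' j, 2⁻¹ ^ (j + 1) * r (i j) x := by
  choose i hi using hr
  let rest : ℕ → PMF Y := fun n => (fun p' => residualPMF p' (r (i p')) (hi p'))^[n] p
  have hstep (n : ℕ) (x : Y) : r (i (rest n)) x + rest (n + 1) x = 2 * rest n x := by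
    simp only [rest, Function.iterate_succ_apply']
    exact residualPMF_add _ _ _ x
  refine ⟨fun n => i (rest n), fun x => ?_⟩
  have htelescope (n : ℕ) :
      ∑ j ∈ Finset.range n, 2⁻¹ ^ (j + 1) * r (i (rest j)) x + 2⁻¹ ^ n * rest n x = p x := by
    induction n with
    | zero => simp [rest]
    | succ n ih =>
      rw [Finset.sum_range_succ, add_assoc, ← mul_add, hstep, pow_succ, mul_assoc, ← mul_assoc 2⁻¹,
        ENNReal.inv_mul_cancel two_ne_zero ENNReal.ofNat_ne_top, one_mul, ih]
  have hvanish : Filter.Tendsto (fun n => 2⁻¹ ^ n * rest n x) Filter.atTop (nhds 0) :=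
    tendsto_of_tendsto_of_tendsto_of_le_of_le tendsto_const_nhds
      (ENNReal.tendsto_pow_atTop_nhds_zero_of_lt_one ENNReal.one_half_lt_one)
      (fun _ => zero_le) fun n => mul_le_of_le_one_right' ((rest n).coe_le_one x)
  have hlim := (ENNReal.tendsto_nat_tsum fun j => 2⁻¹ ^ (j + 1) * r (i (rest j)) x).add hvanish
  simp only [htelescope, add_zero] at hlim
  exact tendsto_nhds_unique tendsto_const_nhds hlim

end Mixture

theorem tsum_toOuterMeasure_fiber_mul {Z κ : Type*} (P : PMF Z) (K : Z → κ) (g : κ → ℝ≥0∞) :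
    ∑' k, P.toOuterMeasure {z | K z = k} * g k = ∑' z, P z * g (K z) := by
  classical
  simp only [PMF.toOuterMeasure_apply, ← ENNReal.tsum_mul_right]
  rw [ENNReal.tsum_comm]
  refine tsum_congr fun z => ?_
  rw [tsum_eq_single (K z) fun k hk => by simp [hk.symm]]
  simp

theorem exists_pmf_eq_measure_fiber {Ω 𝒳 : Type*} [MeasurableSpace Ω] [Countable 𝒳]
    (μ : Measure Ω) [IsProbabilityMeasure μ] {X : Ω → 𝒳}
    (hX : ∀ x, MeasurableSet {ω | X ω = x}) : ∃ p : PMF 𝒳, ∀ x, p x = μ {ω | X ω = x} := by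
  have hsum : ∑' x, μ {ω | X ω = x} = 1 := by
    have h := tsum_measure_preimage_singleton (μ := μ) (f := X) Set.countable_univ fun x _ => hX x
    rwa [Set.preimage_univ, measure_univ,
      tsum_univ fun x => μ (X ⁻¹' {x})] at h
  exact ⟨⟨_, hsum ▸ ENNReal.summable.hasSum⟩, fun _ => rfl⟩

theorem exists_randomVariable_of_pmf {Z : Type*} [Countable Z] (P : PMF Z) :
    ∃ (Ω : Type) (_ : MeasurableSpace Ω) (μ : Measure Ω) (_ : IsProbabilityMeasure μ) (V : Ω → Z),
      (∀ A, MeasurableSet (V ⁻¹' A)) ∧ ∀ A, μ (V ⁻¹' A) = P.toOuterMeasure A := by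
  let _ : MeasurableSpace (Shrink.{0} Z) := ⊤
  have _ : DiscreteMeasurableSpace (Shrink.{0} Z) := ⟨fun _ => trivial⟩
  let e := equivShrink.{0} Z
  refine ⟨Shrink.{0} Z, ⊤, (P.map e).toMeasure, inferInstance, e.symm,
    fun _ => trivial, fun A => ?_⟩
  rw [PMF.toMeasure_apply_eq_toOuterMeasure, PMF.toOuterMeasure_map_apply,
    ← Set.preimage_comp, e.symm_comp_self, Set.preimage_id]

section RandomlyStopped

variable {Ω β : Type*} [MeasurableSpace Ω] {μ : Measure Ω} {K : Ω → List Bool} {W : Ω → β}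

theorem length_lt_and_take_eq_iff {k u : List Bool} :
    u.length < k.length ∧ k.take u.length = u ↔ u ++ [false] <+: k ∨ u ++ [true] <+: k := by
  constructor
  · rintro ⟨hlen, htake⟩
    obtain ⟨_ | ⟨b, t⟩, rfl⟩ := htake ▸ k.take_prefix u.length
    · simp at hlen
    · cases b <;> simp
  · rintro (⟨t, rfl⟩ | ⟨t, rfl⟩) <;> simp

theorem length_lt_and_take_succ_eq_iff {k u : List Bool} {b : Bool} :
    u.length < k.length ∧ k.take (u.length + 1) = u ++ [b] ↔ u ++ [b] <+: k := by
  rw [List.prefix_iff_eq_take, List.length_append, List.length_singleton, eq_comm (a := u ++ [b]),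
    and_iff_right_iff_imp]
  intro h
  have := congrArg List.length h
  simp at this
  omega

theorem isRSBS_of_balanced (hK : ∀ u, MeasurableSet {ω | u <+: K ω})
    (hbal : ∀ u, μ {ω | u ++ [false] <+: K ω} = μ {ω | u ++ [true] <+: K ω}) : IsRSBS μ K := by
  intro u b _
  simp only [length_lt_and_take_eq_iff, length_lt_and_take_succ_eq_iff, Set.ofPred_or]
  have hdisj : Disjoint {ω | u ++ [false] <+: K ω} {ω | u ++ [true] <+: K ω} := by
    rw [Set.disjoint_left]
    rintro ω ⟨s, hs⟩ ⟨t, ht⟩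
    simp [← hs] at ht
  rw [measure_union hdisj (hK _), ← hbal, ← two_mul, ← mul_assoc,
    ENNReal.inv_mul_cancel two_ne_zero ENNReal.ofNat_ne_top, one_mul]
  cases b
  · rfl
  · exact (hbal u).symm

theorem isCondRSBS_of_balanced (hW : ∀ w, MeasurableSet {ω | W ω = w})
    (hK : ∀ u, MeasurableSet {ω | u <+: K ω})
    (hbal : ∀ w u, μ {ω | W ω = w ∧ u ++ [false] <+: K ω} =
      μ {ω | W ω = w ∧ u ++ [true] <+: K ω}) : IsCondRSBS μ K W := fun w _ =>
  isRSBS_of_balanced hK fun u => by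
    rw [cond_apply (hW w), cond_apply (hW w), ← Set.ofPred_and, ← Set.ofPred_and, hbal]

end RandomlyStopped

section Entropy

variable {Y : Type*}

/-- The information content `-log₂ a` of an event of probability `a ≤ 1`, as an extended
nonnegative real. The junk value at `a = 0` is `0`, which is harmless in `bitEntropy`. -/
noncomputable def surprisal (a : ℝ≥0∞) : ℝ≥0∞ := ENNReal.ofReal (-Real.logb 2 a.toReal)

theorem surprisal_two_inv_pow (n : ℕ) : surprisal (2⁻¹ ^ n) = n := by
  simp [surprisal, Real.logb_pow]

theorem surprisal_anti {a b : ℝ≥0∞} (ha : a ≠ 0) (hb : b ≠ ⊤) (hab : a ≤ b) :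
    surprisal b ≤ surprisal a := by
  refine ENNReal.ofReal_le_ofReal (neg_le_neg ?_)
  exact Real.logb_le_logb_of_le one_lt_two (ENNReal.toReal_pos ha (ne_top_of_le_ne_top hb hab))
    (ENNReal.toReal_mono hb hab)

theorem logb_two_le_two_mul {y : ℝ} (hy : 0 < y) : Real.logb 2 y ≤ 2 * y := by
  rw [Real.logb, div_le_iff₀ (Real.log_pos one_lt_two)]
  nlinarith [Real.log_le_sub_one_of_pos hy, Real.log_two_gt_d9]

theorem natCast_le_surprisal_add {a : ℝ≥0∞} (h0 : a ≠ 0) (htop : a ≠ ⊤) (n : ℕ) :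
    (n : ℝ≥0∞) ≤ surprisal a + 2 * (a * 2 ^ n) := by
  have hpos := ENNReal.toReal_pos h0 htop
  have hlog : (n : ℝ) ≤ -Real.logb 2 a.toReal + 2 * (a.toReal * 2 ^ n) := by
    have h := logb_two_le_two_mul (y := a.toReal * 2 ^ n) (by positivity)
    rw [Real.logb_mul hpos.ne' (by positivity), Real.logb_pow,
      Real.logb_self_eq_one one_lt_two] at h
    linarith
  calc (n : ℝ≥0∞) = ENNReal.ofReal n := (ENNReal.ofReal_natCast n).symm
    _ ≤ ENNReal.ofReal (-Real.logb 2 a.toReal + 2 * (a.toReal * 2 ^ n)) :=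
      ENNReal.ofReal_le_ofReal hlog
    _ ≤ surprisal a + ENNReal.ofReal (2 * (a.toReal * 2 ^ n)) := ENNReal.ofReal_add_le
    _ = surprisal a + 2 * (a * 2 ^ n) := by
      rw [ENNReal.ofReal_mul two_pos.le, ENNReal.ofReal_mul hpos.le, ENNReal.ofReal_toReal htop,
        ENNReal.ofReal_pow two_pos.le, ENNReal.ofReal_ofNat]

/-- Shannon entropy in bits, as an extended nonnegative real so that no summability is needed to
manipulate it. -/
noncomputable def bitEntropy (p : PMF Y) : ℝ≥0∞ := ∑' x, p x * surprisal (p x)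

theorem bitEntropy_eq_ofReal {p : PMF Y}
    (h : Summable fun x => -(p x).toReal * Real.logb 2 (p x).toReal) :
    bitEntropy p = ENNReal.ofReal (∑' x, -(p x).toReal * Real.logb 2 (p x).toReal) := by
  have hone (x : Y) : (p x).toReal ≤ 1 := ENNReal.toReal_le_of_le_ofReal one_pos.le
    (by simpa using p.coe_le_one x)
  have hnonneg (x : Y) : 0 ≤ -Real.logb 2 (p x).toReal :=
    neg_nonneg.mpr (Real.logb_nonpos one_lt_two ENNReal.toReal_nonneg (hone x))
  simp only [neg_mul_comm] at h ⊢
  rw [ENNReal.ofReal_tsum_of_nonneg (fun x => mul_nonneg ENNReal.toReal_nonneg (hnonneg x)) h]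
  refine tsum_congr fun x => ?_
  rw [ENNReal.ofReal_mul ENNReal.toReal_nonneg, ENNReal.ofReal_toReal (p.apply_ne_top x), surprisal]

end Entropy

namespace CompleteCode

variable {Y : Type*}

/-- The expected codeword length when `(J, X)` has law `geometricMixture fun j => (C j).toPMF` and
`X` is encoded with the code `C J`. -/
noncomputable def meanLength (C : ℕ → CompleteCode Y) : ℝ≥0∞ :=
  ∑' z, geometricMixture (fun j => (C j).toPMF) z * ((C z.1).code z.2).length

variable {C : ℕ → CompleteCode Y} {p : PMF Y}

theorem two_inv_pow_mul_toPMF_le (hC : ∀ x, p x = ∑' j, 2⁻¹ ^ (j + 1) * (C j).toPMF x)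
    (j : ℕ) (x : Y) : 2⁻¹ ^ (j + 1) * (C j).toPMF x ≤ p x :=
  hC x ▸ ENNReal.le_tsum j

theorem tsum_tsum_geometricMixture_mul (hC : ∀ x, p x = ∑' j, 2⁻¹ ^ (j + 1) * (C j).toPMF x)
    (g : Y → ℝ≥0∞) : ∑' j, ∑' x, 2⁻¹ ^ (j + 1) * (C j).toPMF x * g x = ∑' x, p x * g x := by
  rw [ENNReal.tsum_comm]
  exact tsum_congr fun x => by rw [ENNReal.tsum_mul_right, ← hC]

theorem meanLength_eq_tsum_tsum :
    meanLength C = ∑' j, ∑' x, 2⁻¹ ^ (j + 1) * (C j).toPMF x * ((C j).code x).length := by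
  rw [meanLength, ENNReal.tsum_prod']
  rfl

/-- This is `H(X) ≤ H(J, X) = H(J) + H(X | J)`, where `H(X | J)` is the mean length. -/
theorem bitEntropy_le_meanLength_add_two
    (hC : ∀ x, p x = ∑' j, 2⁻¹ ^ (j + 1) * (C j).toPMF x) :
    bitEntropy p ≤ meanLength C + 2 := by
  have hterm (j : ℕ) (x : Y) : 2⁻¹ ^ (j + 1) * (C j).toPMF x * surprisal (p x) ≤
      2⁻¹ ^ (j + 1) * (C j).toPMF x * ((C j).code x).length +
        2⁻¹ ^ (j + 1) * (j + 1 : ℕ) * (C j).toPMF x := by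
    by_cases hx : (C j).toPMF x = 0
    · simp [hx]
    have hmass := (C j).toPMF_of_mem ((C j).mem_support_of_toPMF_ne_zero hx)
    have hle : surprisal (p x) ≤ (((C j).code x).length : ℝ≥0∞) + (j + 1 : ℕ) := by
      rw [← Nat.cast_add, ← surprisal_two_inv_pow, pow_add, mul_comm, ← hmass]
      exact surprisal_anti (mul_ne_zero (by simp) hx) (p.apply_ne_top x)
        (two_inv_pow_mul_toPMF_le hC j x)
    refine (mul_le_mul_right hle _).trans_eq ?_
    rw [mul_add, mul_right_comm _ ((j + 1 : ℕ) : ℝ≥0∞)]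
  calc bitEntropy p = ∑' j, ∑' x, 2⁻¹ ^ (j + 1) * (C j).toPMF x * surprisal (p x) :=
        (tsum_tsum_geometricMixture_mul hC _).symm
    _ ≤ ∑' j, ∑' x, (2⁻¹ ^ (j + 1) * (C j).toPMF x * ((C j).code x).length +
          2⁻¹ ^ (j + 1) * (j + 1 : ℕ) * (C j).toPMF x) :=
        ENNReal.tsum_le_tsum fun j => ENNReal.tsum_le_tsum fun x => hterm j x
    _ = meanLength C + 2 := by
        simp only [ENNReal.tsum_add, ENNReal.tsum_mul_left, PMF.tsum_coe, mul_one,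
          tsum_two_inv_pow_succ_mul, meanLength_eq_tsum_tsum]

theorem meanLength_le_bitEntropy_add_two
    (hC : ∀ x, p x = ∑' j, 2⁻¹ ^ (j + 1) * (C j).toPMF x) :
    meanLength C ≤ bitEntropy p + 2 := by
  have hterm (j : ℕ) (x : Y) : 2⁻¹ ^ (j + 1) * (C j).toPMF x * ((C j).code x).length ≤
      2⁻¹ ^ (j + 1) * (C j).toPMF x * surprisal (p x) + 2⁻¹ ^ (j + 1) * (2 * p x) := by
    by_cases hx : (C j).toPMF x = 0
    · simp [hx]
    have hmass := (C j).toPMF_of_mem ((C j).mem_support_of_toPMF_ne_zero hx)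
    have hp : p x ≠ 0 := ne_bot_of_le_ne_bot (mul_ne_zero (by simp) hx)
      (two_inv_pow_mul_toPMF_le hC j x)
    refine (mul_le_mul_right (natCast_le_surprisal_add hp (p.apply_ne_top x) _) _).trans_eq ?_
    rw [mul_add, hmass, mul_assoc _ _ (2 * _), mul_left_comm _ 2, mul_left_comm _ (p x), ← mul_pow,
      ENNReal.inv_mul_cancel two_ne_zero ENNReal.ofNat_ne_top, one_pow, mul_one]
  calc meanLength C = ∑' j, ∑' x, 2⁻¹ ^ (j + 1) * (C j).toPMF x * ((C j).code x).length :=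
        meanLength_eq_tsum_tsum
    _ ≤ ∑' j, ∑' x, (2⁻¹ ^ (j + 1) * (C j).toPMF x * surprisal (p x) +
          2⁻¹ ^ (j + 1) * (2 * p x)) :=
        ENNReal.tsum_le_tsum fun j => ENNReal.tsum_le_tsum fun x => hterm j x
    _ = bitEntropy p + 2 := by
        simp only [ENNReal.tsum_add, ENNReal.tsum_mul_left, ENNReal.tsum_mul_right, PMF.tsum_coe,
          tsum_tsum_geometricMixture_mul hC, tsum_two_inv_pow_succ, bitEntropy, one_mul, mul_one]

theorem entropy_sub_two_le_toReal_meanLength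
    (hC : ∀ x, p x = ∑' j, 2⁻¹ ^ (j + 1) * (C j).toPMF x)
    (h : Summable fun x => -(p x).toReal * Real.logb 2 (p x).toReal) :
    ∑' x, -(p x).toReal * Real.logb 2 (p x).toReal - 2 ≤ (meanLength C).toReal := by
  have hH := bitEntropy_eq_ofReal h
  have hfin : meanLength C ≠ ⊤ := ne_top_of_le_ne_top
    (by simp [hH]) (meanLength_le_bitEntropy_add_two hC)
  have hle := bitEntropy_le_meanLength_add_two hC
  rw [hH, ← ENNReal.ofReal_toReal hfin, ← ENNReal.ofReal_ofNat,
    ← ENNReal.ofReal_add ENNReal.toReal_nonneg two_pos.le,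
    ENNReal.ofReal_le_ofReal_iff (by positivity)] at hle
  linarith

end CompleteCode

section SideInformation

variable {Ω Y : Type*} [MeasurableSpace Ω] {μ : Measure Ω} {Z : Ω → ℕ × Y}

theorem measure_fst_succ_eq_and_snd_mem {q : ℕ → PMF Y}
    (hZ : ∀ A, μ (Z ⁻¹' A) = (geometricMixture q).toOuterMeasure A) (j : ℕ) (A : Set Y) :
    μ {ω | (Z ω).1 + 1 = j + 1 ∧ (Z ω).2 ∈ A} = 2⁻¹ ^ (j + 1) * (q j).toOuterMeasure A := by
  simp only [Nat.add_right_cancel_iff]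
  exact (hZ {z | z.1 = j ∧ z.2 ∈ A}).trans
    (geometricMixture_toOuterMeasure_fst_eq_and_snd_mem q j A)

variable {C : ℕ → CompleteCode Y}

theorem isCondRSBS_of_geometricMixture (hmeas : ∀ A, MeasurableSet (Z ⁻¹' A))
    (hZ : ∀ A, μ (Z ⁻¹' A) = (geometricMixture fun j => (C j).toPMF).toOuterMeasure A) :
    IsCondRSBS μ (fun ω => (C (Z ω).1).code (Z ω).2) fun ω => (Z ω).1 + 1 := by
  refine isCondRSBS_of_balanced (fun w => hmeas {z | z.1 + 1 = w})
    (fun u => hmeas {z | u <+: (C z.1).code z.2}) fun w u => ?_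
  rcases w with _ | j
  · simp
  have hmass (v : List Bool) : μ {ω | (Z ω).1 + 1 = j + 1 ∧ v <+: (C (Z ω).1).code (Z ω).2} =
      2⁻¹ ^ (j + 1) * prefixMass (C j).support (C j).code v := by
    rw [← (C j).toOuterMeasure_prefix, ← measure_fst_succ_eq_and_snd_mem hZ]
    congr 1 with ω
    refine and_congr_right fun hj => ?_
    rw [Nat.add_right_cancel hj, Set.mem_ofPred_eq]
  rw [hmass, hmass, (C j).balanced]

theorem mem_support_of_measure_pos
    (hZ : ∀ A, μ (Z ⁻¹' A) = (geometricMixture fun j => (C j).toPMF).toOuterMeasure A)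
    {w : ℕ} {x : Y} (h : 0 < μ {ω | (Z ω).1 + 1 = w ∧ (Z ω).2 = x}) :
    x ∈ (C (w - 1)).support := by
  rcases w with _ | j
  · simp at h
  have hmass := measure_fst_succ_eq_and_snd_mem hZ j {x}
  rw [PMF.toOuterMeasure_apply_singleton] at hmass
  exact (C j).mem_support_of_toPMF_ne_zero (right_ne_zero_of_mul (hmass ▸ h.ne'))

theorem tsum_length_mul_toReal_eq_meanLength [IsFiniteMeasure μ]
    (hZ : ∀ A, μ (Z ⁻¹' A) = (geometricMixture fun j => (C j).toPMF).toOuterMeasure A) :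
    ∑' k : List Bool, (k.length : ℝ) * (μ {ω | (C (Z ω).1).code (Z ω).2 = k}).toReal =
      (CompleteCode.meanLength C).toReal := by
  rw [CompleteCode.meanLength, ← tsum_toOuterMeasure_fiber_mul
    (geometricMixture fun j => (C j).toPMF) (fun z => (C z.1).code z.2) fun k => k.length,
    ENNReal.tsum_toReal_eq]
  · refine tsum_congr fun k => ?_
    rw [ENNReal.toReal_mul, ENNReal.toReal_natCast, mul_comm, ← hZ]
    rfl
  · exact fun k => ENNReal.mul_ne_top (hZ _ ▸ measure_ne_top μ _) (ENNReal.natCast_ne_top _)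

end SideInformation

/-- Key agreement from common randomness: for any random variable `X` with values in a
countable set and finite Shannon entropy `H(X)`, there is a joint distribution of
`(X, W)` (on a fresh probability space, with `X' ~ X`) where `W ~ Geom(1/2)`, together
with functions `f_w : 𝒳 → {0,1}*`, such that `K := f_W(X)` is a conditionally
randomly-stopped bit sequence given `W`, `x ↦ f_w(x)` is injective on the support of the
conditional distribution of `X` given `W = w` for each `w`, and `E[|K|] ≥ H(X) − 2`. -/
theorem stmt13 {Ω 𝒳 : Type*} [MeasurableSpace Ω] [Countable 𝒳]
    (μ : Measure Ω) [IsProbabilityMeasure μ] (X : Ω → 𝒳)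
    (hXmeas : ∀ x : 𝒳, MeasurableSet {ω | X ω = x})
    (hent : Summable fun x : 𝒳 =>
      -((μ {ω | X ω = x}).toReal) * Real.logb 2 (μ {ω | X ω = x}).toReal) :
    ∃ (Ω' : Type) (_ : MeasurableSpace Ω') (μ' : Measure Ω') (_ : IsProbabilityMeasure μ')
      (X' : Ω' → 𝒳) (W : Ω' → ℕ) (f : ℕ → 𝒳 → List Bool),
      (∀ x : 𝒳, MeasurableSet {ω | X' ω = x}) ∧
      (∀ w : ℕ, MeasurableSet {ω | W ω = w}) ∧
      (∀ x : 𝒳, μ' {ω | X' ω = x} = μ {ω | X ω = x}) ∧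
      (∀ w : ℕ, 1 ≤ w → μ' {ω | W ω = w} = ((2 : ℝ≥0∞)⁻¹) ^ w) ∧
      IsCondRSBS μ' (fun ω => f (W ω) (X' ω)) W ∧
      (∀ w : ℕ, ∀ x y : 𝒳, 0 < μ' {ω | W ω = w ∧ X' ω = x} →
        0 < μ' {ω | W ω = w ∧ X' ω = y} → f w x = f w y → x = y) ∧
      (∑' x : 𝒳, -((μ {ω | X ω = x}).toReal) * Real.logb 2 (μ {ω | X ω = x}).toReal) - 2
        ≤ ∑' k : List Bool, (k.length : ℝ) * (μ' {ω | f (W ω) (X' ω) = k}).toReal := by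
  obtain ⟨p, hp⟩ := exists_pmf_eq_measure_fiber μ hXmeas
  simp only [← hp] at hent ⊢
  obtain ⟨C, hC⟩ := exists_eq_tsum_two_inv_pow_mul CompleteCode.exists_toPMF_le p
  obtain ⟨Ω', mΩ', μ', hμ', Z, hmeas, hZ⟩ :=
    exists_randomVariable_of_pmf (geometricMixture fun j => (C j).toPMF)
  refine ⟨Ω', mΩ', μ', hμ', fun ω => (Z ω).2, fun ω => (Z ω).1 + 1, fun w => (C (w - 1)).code,
    fun x => hmeas {z | z.2 = x}, fun w => hmeas {z | z.1 + 1 = w}, fun x => ?_, fun w hw => ?_,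
    isCondRSBS_of_geometricMixture hmeas hZ, fun w x y hx hy => ?_, ?_⟩
  · exact (hZ {z | z.2 = x}).trans ((geometricMixture_toOuterMeasure_snd_eq _ x).trans (hC x).symm)
  · obtain ⟨j, rfl⟩ := Nat.exists_eq_add_of_le' hw
    have hone := ((C j).toPMF.toOuterMeasure_apply_eq_one_iff Set.univ).mpr (Set.subset_univ _)
    simpa [hone] using measure_fst_succ_eq_and_snd_mem hZ j Set.univ
  · exact fun hxy => (C (w - 1)).injOn (mem_support_of_measure_pos hZ hx)
      (mem_support_of_measure_pos hZ hy) hxy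
  · exact (CompleteCode.entropy_sub_two_le_toReal_meanLength hC hent).trans_eq
      (tsum_length_mul_toReal_eq_meanLength hZ).symm
end

section
/- Let X and Y be jointly distributed random variables taking values in finite sets 𝒳 and 𝒴 respectively, and let m ≥ 1 be an integer. Then there exists a function f : 𝒳 ∪ 𝒴 → {1, …, m} such that P(f(X) = f(Y), X ≠ Y) ≤ P(X ≠ Y)/m. -/
open MeasureTheory
open scoped ENNReal

/-! Choose the hash values of the letters independently and uniformly at random. Two distinct
letters then collide with probability `1 / m`, so by Tonelli the expected mass of the event
`f(X) = f(Y), X ≠ Y` is `P(X ≠ Y) / m`, and some hash function does at least as well as the mean.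
Since `(X, Y)` takes countably many values, Tonelli only exchanges an integral and a sum. -/

section Averaging

variable {Ω ι κ : Type*} [MeasurableSpace Ω] [MeasurableSpace κ] [Countable ι]
  {μ : Measure Ω} {ν : Measure κ} {Z : Ω → ι} {A : κ → Set ι}

lemma measure_preimage_eq_tsum_indicator (hZ : ∀ z, MeasurableSet (Z ⁻¹' {z})) (s : Set ι) :
    μ (Z ⁻¹' s) = ∑' z, s.indicator (fun z ↦ μ (Z ⁻¹' {z})) z := by
  rw [← tsum_subtype, tsum_measure_preimage_singleton s.to_countable fun z _ ↦ hZ z]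

lemma measurable_measure_preimage_of_countable (hZ : ∀ z, MeasurableSet (Z ⁻¹' {z}))
    (hA : ∀ z, MeasurableSet {k | z ∈ A k}) : Measurable fun k ↦ μ (Z ⁻¹' A k) := by
  have hsum : (fun k ↦ μ (Z ⁻¹' A k)) =
      fun k ↦ ∑' z, {k | z ∈ A k}.indicator (fun _ ↦ μ (Z ⁻¹' {z})) k :=
    funext fun k ↦ measure_preimage_eq_tsum_indicator hZ (A k)
  rw [hsum]
  exact .tsum fun z ↦ measurable_const.indicator (hA z)

lemma lintegral_measure_preimage_eq_tsum (hZ : ∀ z, MeasurableSet (Z ⁻¹' {z}))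
    (hA : ∀ z, MeasurableSet {k | z ∈ A k}) :
    ∫⁻ k, μ (Z ⁻¹' A k) ∂ν = ∑' z, μ (Z ⁻¹' {z}) * ν {k | z ∈ A k} := by
  calc ∫⁻ k, μ (Z ⁻¹' A k) ∂ν
      = ∫⁻ k, ∑' z, {k | z ∈ A k}.indicator (fun _ ↦ μ (Z ⁻¹' {z})) k ∂ν :=
        lintegral_congr fun k ↦ measure_preimage_eq_tsum_indicator hZ (A k)
    _ = ∑' z, ∫⁻ k, {k | z ∈ A k}.indicator (fun _ ↦ μ (Z ⁻¹' {z})) k ∂ν :=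
        lintegral_tsum fun z ↦ (measurable_const.indicator (hA z)).aemeasurable
    _ = ∑' z, μ (Z ⁻¹' {z}) * ν {k | z ∈ A k} :=
        tsum_congr fun z ↦ lintegral_indicator_const (hA z) _

lemma exists_measure_preimage_inter_le [IsProbabilityMeasure ν] {D : Set ι} {ε : ℝ≥0∞}
    (hZ : ∀ z, MeasurableSet (Z ⁻¹' {z})) (hA : ∀ z, MeasurableSet {k | z ∈ A k})
    (hε : ∀ z ∈ D, ν {k | z ∈ A k} ≤ ε) :
    ∃ k, μ (Z ⁻¹' (A k ∩ D)) ≤ μ (Z ⁻¹' D) * ε := by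
  have hAD (z : ι) : MeasurableSet {k | z ∈ A k ∩ D} := (hA z).inter (.const (z ∈ D))
  have hmean : ∫⁻ k, μ (Z ⁻¹' (A k ∩ D)) ∂ν ≤ μ (Z ⁻¹' D) * ε := by
    rw [lintegral_measure_preimage_eq_tsum hZ hAD, measure_preimage_eq_tsum_indicator hZ D,
      ← ENNReal.tsum_mul_right]
    refine ENNReal.tsum_le_tsum fun z ↦ ?_
    by_cases hz : z ∈ D
    · simpa [hz] using mul_le_mul_right (hε z hz) _
    · simp [hz]
  obtain ⟨k, hk⟩ :=
    exists_le_lintegral (measurable_measure_preimage_of_countable hZ hAD).aemeasurable (μ := ν)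
  exact ⟨k, hk.trans hmean⟩

end Averaging

section RandomFunction

variable {α β : Type*} [MeasurableSpace β] [MeasurableSingletonClass β] {x y : α}

lemma infinitePi_setOf_apply_eq_apply [Countable β] (p : Measure β) [IsProbabilityMeasure p]
    (hxy : x ≠ y) :
    Measure.infinitePi (fun _ : α ↦ p) {f | f x = f y} = ∑' b, p {b} ^ 2 := by
  classical
  have hfiber (b : β) : {f : α → β | f x = b ∧ f y = b} =
      Set.pi ({x, y} : Finset α) fun _ ↦ {b} := by
    ext f
    simp
  have hunion : {f : α → β | f x = f y} = ⋃ b, {f | f x = b ∧ f y = b} := by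
    ext f
    simp [eq_comm]
  have hdisjoint : Pairwise (Function.onFun Disjoint fun b ↦ {f : α → β | f x = b ∧ f y = b}) :=
    fun b c hbc ↦ Set.disjoint_left.2 fun f hb hc ↦ hbc (hb.1.symm.trans hc.1)
  rw [hunion, measure_iUnion hdisjoint fun b ↦ by measurability]
  refine tsum_congr fun b ↦ ?_
  rw [hfiber, Measure.infinitePi_pi _ fun _ _ ↦ measurableSet_singleton b,
    Finset.prod_pair hxy, sq]

lemma infinitePi_uniformOn_univ_setOf_apply_eq_apply [Finite β] [Nonempty β] (hxy : x ≠ y) :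
    Measure.infinitePi (fun _ : α ↦ ProbabilityTheory.uniformOn (Set.univ : Set β))
      {f | f x = f y} = (Nat.card β : ℝ≥0∞)⁻¹ := by
  have := Fintype.ofFinite β
  have hcard : (Fintype.card β : ℝ≥0∞) ≠ 0 := by simp
  rw [infinitePi_setOf_apply_eq_apply _ hxy]
  simp only [ProbabilityTheory.uniformOn_univ, Measure.count_singleton, one_div, tsum_fintype,
    Finset.sum_const, Finset.card_univ, nsmul_eq_mul, Nat.card_eq_fintype_card]
  rw [sq, ← mul_assoc, ENNReal.mul_inv_cancel hcard (by simp), one_mul]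

end RandomFunction

theorem stmt14_general {Ω α β : Type*} [MeasurableSpace Ω] [Countable α] [Finite β] [Nonempty β]
    (μ : Measure Ω) (X Y : Ω → α)
    (hXYmeas : ∀ x y : α, MeasurableSet {ω | X ω = x ∧ Y ω = y}) :
    ∃ f : α → β,
      μ {ω | f (X ω) = f (Y ω) ∧ X ω ≠ Y ω} ≤ μ {ω | X ω ≠ Y ω} / Nat.card β := by
  let _ : MeasurableSpace β := ⊤
  have hfiber (z : α × α) : MeasurableSet ((fun ω ↦ (X ω, Y ω)) ⁻¹' {z}) := by
    simpa only [Set.preimage, Set.mem_singleton_iff, Prod.ext_iff] using hXYmeas z.1 z.2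
  have hcollision (z : α × α) : MeasurableSet {f : α → β | f z.1 = f z.2} :=
    measurableSet_eq_fun (measurable_pi_apply z.1) (measurable_pi_apply z.2)
  exact exists_measure_preimage_inter_le
    (A := fun f : α → β ↦ {z : α × α | f z.1 = f z.2}) (D := {z | z.1 ≠ z.2})
    hfiber hcollision fun z hz ↦ (infinitePi_uniformOn_univ_setOf_apply_eq_apply hz).le

/-- Random hashing: for jointly distributed random variables `X, Y` with values in a
finite alphabet `α` (playing the role of `𝒳 ∪ 𝒴`) and any integer `m ≥ 1`, there is a
function `f : α → {1, …, m}` with `P(f(X) = f(Y), X ≠ Y) ≤ P(X ≠ Y)/m`. -/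
theorem stmt14 {Ω α : Type*} [MeasurableSpace Ω] [Fintype α]
    (μ : Measure Ω) [IsProbabilityMeasure μ] (X Y : Ω → α)
    (hXYmeas : ∀ x y : α, MeasurableSet {ω | X ω = x ∧ Y ω = y})
    (m : ℕ) (hm : 1 ≤ m) :
    ∃ f : α → Fin m,
      μ {ω | f (X ω) = f (Y ω) ∧ X ω ≠ Y ω} ≤ μ {ω | X ω ≠ Y ω} / m := by
  have : Nonempty (Fin m) := ⟨⟨0, hm⟩⟩
  simpa only [Nat.card_fin] using stmt14_general (β := Fin m) μ X Y hXYmeas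
end
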